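/- arXiv:math/0503115 — 2 statements merged into one kernel-verified Lean document; each statement's English description precedes it below -/
import Mathlib

section
/- For any unit vector s = (s₁,…,s_n) ∈ ℝⁿ (|s| = 1) with all coordinates nonzero, ‖s‖_∞ · ∫₀^∞ ∏_{i=1}^n (sin(s_i t)/(s_i t)) dt ≥ ∫₀^∞ (sin t / t)^n dt, with equality only if n = 2 or s/‖s‖_∞ is a vertex of the cube [−1,1]ⁿ. -/
open MeasureTheory

noncomputable def maxNorm {n : ℕ} (x : EuclideanSpace ℝ (Fin n)) : ℝ :=
  ‖(WithLp.equiv 2 (Fin n → ℝ)) x‖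

/-!
Multiplying an integrable `G` by `sinc (a t)` averages its cosine transform over windows of
half-width `a`, which keeps an even function unimodal. A product of two dilated sinc functions has
a trapezoid as its cosine transform, so by induction every product of at least two of them has a
cosine transform that decreases on `[0, ∞)`. Since `∫ sinc (a t) G(t) dt` is the mean of that
transform over `[0, a]`, it decreases with `a`. Hence replacing every `|sᵢ|` by `‖s‖_∞` can only
decrease `∫ ∏ sinc (sᵢ t) dt`, and a dilation turns the resulting integral into `∫ sincⁿ`.

With at least three factors, the transform of a power `sinc (c t) ^ k`, `k ≥ 2`, decreases strictly
on `[0, c]`, which gives strictness as soon as one `|sᵢ|` is smaller than `‖s‖_∞`. With two factors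
the integral depends on the larger of `|s₁|, |s₂|` only.
-/

open Real Set Function

section CosTransform

/-- The cosine transform `x ↦ ∫₀^∞ cos (x t) G(t) dt`, which plays the role of the Fourier transform
of the even extension of `G`. -/
noncomputable def cosTransform (G : ℝ → ℝ) (x : ℝ) : ℝ :=
  ∫ t in Ioi (0 : ℝ), cos (x * t) * G t

/-- Integrable functions on the half-line whose cosine transform, an even function, is unimodal with
mode `0`; the class is closed under multiplication by dilated sinc functions. -/
structure HasUnimodalCosTransform (G : ℝ → ℝ) : Prop where
  integrableOn : IntegrableOn G (Ioi 0)
  antitoneOn : AntitoneOn (cosTransform G) (Ici 0)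

variable {G : ℝ → ℝ} {a c : ℝ}

lemma cosTransform_zero (G : ℝ → ℝ) : cosTransform G 0 = ∫ t in Ioi (0 : ℝ), G t := by
  simp [cosTransform]

lemma cosTransform_neg (G : ℝ → ℝ) (x : ℝ) : cosTransform G (-x) = cosTransform G x := by
  simp [cosTransform]

lemma cosTransform_abs (G : ℝ → ℝ) (x : ℝ) : cosTransform G |x| = cosTransform G x := by
  rcases abs_choice x with h | h <;> simp only [h, cosTransform_neg]

lemma continuous_cosTransform (hG : IntegrableOn G (Ioi 0)) : Continuous (cosTransform G) := by
  refine continuous_of_dominated (bound := fun t ↦ ‖G t‖)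
    (fun x ↦ (by fun_prop : Continuous fun t ↦ cos (x * t)).aestronglyMeasurable.mul
      hG.aestronglyMeasurable)
    (fun x ↦ ae_of_all _ fun t ↦ ?_) hG.norm (ae_of_all _ fun t ↦ by fun_prop)
  rw [norm_mul]
  exact mul_le_of_le_one_left (norm_nonneg _) (abs_cos_le_one _)

lemma integrableOn_sinc_mul (hG : IntegrableOn G (Ioi 0)) (a : ℝ) :
    IntegrableOn (fun t ↦ sinc (a * t) * G t) (Ioi 0) :=
  hG.bdd_mul (by fun_prop : Continuous fun t ↦ sinc (a * t)).aestronglyMeasurable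
    (ae_of_all _ fun t ↦ abs_sinc_le_one (a * t))

lemma integral_cos_mul_right (p q : ℝ) {t : ℝ} (ht : t ≠ 0) :
    ∫ u in p..q, cos (u * t) = (sin (q * t) - sin (p * t)) / t := by
  rw [intervalIntegral.integral_comp_mul_right _ ht, integral_cos, smul_eq_mul, inv_mul_eq_div]

lemma intervalIntegral_cosTransform (hG : IntegrableOn G (Ioi 0)) (p q : ℝ) :
    ∫ u in p..q, cosTransform G u =
      ∫ t in Ioi (0 : ℝ), (sin (q * t) - sin (p * t)) / t * G t := by
  have : IsFiniteMeasure (volume.restrict (uIoc p q)) := ⟨by simp [uIoc]⟩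
  have hint : Integrable (uncurry fun u t ↦ cos (u * t) * G t)
      ((volume.restrict (uIoc p q)).prod (volume.restrict (Ioi 0))) :=
    (hG.comp_snd _).bdd_mul
      (by fun_prop : Continuous fun z : ℝ × ℝ ↦ cos (z.1 * z.2)).aestronglyMeasurable
      (ae_of_all _ fun z ↦ abs_cos_le_one _)
  unfold cosTransform
  rw [intervalIntegral_integral_swap hint]
  refine setIntegral_congr_fun measurableSet_Ioi fun t ht ↦ ?_
  simp only [intervalIntegral.integral_mul_const, integral_cos_mul_right p q (ne_of_gt ht)]

lemma cosTransform_sinc_mul (hG : IntegrableOn G (Ioi 0)) (ha : a ≠ 0) (x : ℝ) :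
    cosTransform (fun t ↦ sinc (a * t) * G t) x =
      (2 * a)⁻¹ * ∫ u in (x - a)..(x + a), cosTransform G u := by
  rw [intervalIntegral_cosTransform hG, ← integral_const_mul]
  refine setIntegral_congr_fun measurableSet_Ioi fun t ht ↦ ?_
  have ht : t ≠ 0 := ne_of_gt ht
  simp only [sinc_of_ne_zero (mul_ne_zero ha ht), add_mul, sub_mul, sin_add, sin_sub]
  field_simp
  ring

lemma setIntegral_sinc_mul (hG : IntegrableOn G (Ioi 0)) (ha : a ≠ 0) :
    ∫ t in Ioi (0 : ℝ), sinc (a * t) * G t = ∫ u in (0 : ℝ)..1, cosTransform G (a * u) := by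
  rw [intervalIntegral.integral_comp_mul_left _ ha, intervalIntegral_cosTransform hG, smul_eq_mul,
    ← integral_const_mul]
  refine setIntegral_congr_fun measurableSet_Ioi fun t ht ↦ ?_
  have ht : t ≠ 0 := ne_of_gt ht
  simp only [sinc_of_ne_zero (mul_ne_zero ha ht), mul_one, mul_zero, zero_mul, sin_zero, sub_zero]
  field_simp

lemma cosTransform_sinc_mul_sub (hG : IntegrableOn G (Ioi 0)) (ha : a ≠ 0) (x y : ℝ) :
    cosTransform (fun t ↦ sinc (a * t) * G t) x - cosTransform (fun t ↦ sinc (a * t) * G t) y =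
      (2 * a)⁻¹ * ∫ u in x..y, (cosTransform G (u - a) - cosTransform G (u + a)) := by
  have hc := continuous_cosTransform hG
  have hint (p q : ℝ) : IntervalIntegrable (cosTransform G) volume p q := hc.intervalIntegrable p q
  rw [cosTransform_sinc_mul hG ha, cosTransform_sinc_mul hG ha, ← mul_sub,
    intervalIntegral.integral_sub (Continuous.intervalIntegrable (by fun_prop) _ _)
      (Continuous.intervalIntegrable (by fun_prop) _ _),
    intervalIntegral.integral_comp_sub_right, intervalIntegral.integral_comp_add_right,
    intervalIntegral.integral_interval_sub_interval_comm (hint _ _) (hint _ _) (hint _ _)]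

namespace HasUnimodalCosTransform

lemma cosTransform_le_of_abs_le (hG : HasUnimodalCosTransform G) {x y : ℝ} (hxy : |x| ≤ |y|) :
    cosTransform G y ≤ cosTransform G x := by
  rw [← cosTransform_abs G x, ← cosTransform_abs G y]
  exact hG.antitoneOn (abs_nonneg x) (abs_nonneg y) hxy

lemma sinc_mul (hG : HasUnimodalCosTransform G) (ha : 0 < a) :
    HasUnimodalCosTransform fun t ↦ sinc (a * t) * G t := by
  refine ⟨integrableOn_sinc_mul hG.integrableOn a, fun x hx y _ hxy ↦ ?_⟩
  rw [← sub_nonneg, cosTransform_sinc_mul_sub hG.integrableOn ha.ne']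
  refine mul_nonneg (by positivity) (intervalIntegral.integral_nonneg hxy fun u hu ↦ ?_)
  have hu : 0 ≤ u := le_trans hx hu.1
  refine sub_nonneg.2 (hG.cosTransform_le_of_abs_le ?_)
  rw [abs_of_nonneg (by positivity : 0 ≤ u + a), abs_le]
  constructor <;> linarith

lemma strictAntiOn_cosTransform_sinc_mul (hG : HasUnimodalCosTransform G) (hc : 0 < c)
    (hstrict : StrictAntiOn (cosTransform G) (Icc 0 c)) :
    StrictAntiOn (cosTransform fun t ↦ sinc (c * t) * G t) (Icc 0 c) := by
  intro x hx y hy hxy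
  have hcont := continuous_cosTransform hG.integrableOn
  rw [← sub_pos, cosTransform_sinc_mul_sub hG.integrableOn hc.ne']
  refine mul_pos (by positivity) (intervalIntegral.intervalIntegral_pos_of_pos_on
    (Continuous.intervalIntegrable (by fun_prop) _ _) (fun u hu ↦ sub_pos.2 ?_) hxy)
  have hu_pos : 0 < u := hx.1.trans_lt hu.1
  have hu_lt : u < c := hu.2.trans_le hy.2
  calc cosTransform G (u + c) ≤ cosTransform G c :=
        hG.antitoneOn hc.le (add_pos hu_pos hc).le (by linarith)
    _ < cosTransform G (c - u) := hstrict ⟨by linarith, by linarith⟩ ⟨hc.le, le_rfl⟩ (by linarith)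
    _ = cosTransform G (u - c) := by rw [← cosTransform_neg, neg_sub]

lemma antitoneOn_setIntegral_sinc_mul (hG : HasUnimodalCosTransform G) :
    AntitoneOn (fun a ↦ ∫ t in Ioi (0 : ℝ), sinc (a * t) * G t) (Ioi 0) := by
  intro a (ha : 0 < a) b (hb : 0 < b) hab
  have hcont := continuous_cosTransform hG.integrableOn
  simp only [setIntegral_sinc_mul hG.integrableOn ha.ne',
    setIntegral_sinc_mul hG.integrableOn hb.ne']
  refine intervalIntegral.integral_mono_on zero_le_one
    (Continuous.intervalIntegrable (by fun_prop) _ _)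
    (Continuous.intervalIntegrable (by fun_prop) _ _) fun u hu ↦ ?_
  exact hG.antitoneOn (mul_nonneg ha.le hu.1) (mul_nonneg hb.le hu.1)
    (mul_le_mul_of_nonneg_right hab hu.1)

end HasUnimodalCosTransform

lemma strictAntiOn_setIntegral_sinc_mul (hG : IntegrableOn G (Ioi 0))
    (hstrict : StrictAntiOn (cosTransform G) (Icc 0 c)) :
    StrictAntiOn (fun a ↦ ∫ t in Ioi (0 : ℝ), sinc (a * t) * G t) (Ioc 0 c) := by
  intro a ⟨ha, hac⟩ b ⟨hb, hbc⟩ hab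
  have hcont := continuous_cosTransform hG
  simp only [setIntegral_sinc_mul hG ha.ne', setIntegral_sinc_mul hG hb.ne']
  rw [← sub_pos, ← intervalIntegral.integral_sub (Continuous.intervalIntegrable (by fun_prop) _ _)
    (Continuous.intervalIntegrable (by fun_prop) _ _)]
  refine intervalIntegral.intervalIntegral_pos_of_pos_on
    (Continuous.intervalIntegrable (by fun_prop) _ _) (fun u hu ↦ sub_pos.2 ?_) one_pos
  have mul_mem {d : ℝ} (hd : 0 < d) (hdc : d ≤ c) : d * u ∈ Icc 0 c :=
    ⟨mul_nonneg hd.le hu.1.le, (mul_le_of_le_one_right hd.le hu.2.le).trans hdc⟩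
  exact hstrict (mul_mem ha hac) (mul_mem hb hbc) (mul_lt_mul_of_pos_right hab hu.1)

end CosTransform

section TwoFactors

lemma sinc_abs_mul (a t : ℝ) : sinc (|a| * t) = sinc (a * t) := by
  rcases abs_choice a with h | h <;> simp only [h, neg_mul, sinc_neg]

lemma sinc_sq_le (x : ℝ) : sinc x ^ 2 ≤ 2 * (1 + x ^ 2)⁻¹ := by
  have sq_le_one : sinc x ^ 2 ≤ 1 := (sq_le_one_iff_abs_le_one _).2 (abs_sinc_le_one x)
  have sq_mul_sq_le_one : sinc x ^ 2 * x ^ 2 ≤ 1 := by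
    rcases eq_or_ne x 0 with rfl | hx
    · simp
    · rw [sinc_of_ne_zero hx, div_pow, div_mul_cancel₀ _ (by positivity)]
      exact sin_sq_le_one x
  rw [← div_eq_mul_inv, le_div_iff₀ (by positivity)]
  linarith

lemma integrable_sinc_sq : Integrable fun t ↦ sinc t ^ 2 := by
  refine (integrable_inv_one_add_sq.const_mul 2).mono' (by fun_prop) (ae_of_all _ fun t ↦ ?_)
  rw [norm_of_nonneg (by positivity)]
  exact sinc_sq_le t

/-- The constant `∫₀^∞ sinc² t dt`, equal to `π / 2`; only its positivity matters here. -/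
noncomputable def sincSqIntegral : ℝ := ∫ t in Ioi (0 : ℝ), sinc t ^ 2

lemma sincSqIntegral_pos : 0 < sincSqIntegral := by
  unfold sincSqIntegral
  rw [setIntegral_pos_iff_support_of_nonneg_ae (ae_of_all _ fun t ↦ by positivity)
    integrable_sinc_sq.integrableOn]
  refine lt_of_lt_of_le (by simp) (measure_mono (s := Ioo 0 1) fun t ht ↦ ⟨?_, ht.1⟩)
  have ht_pos : 0 < t := ht.1
  have sin_pos : 0 < sin t := sin_pos_of_pos_of_lt_pi ht_pos (by linarith [ht.2, pi_gt_three])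
  rw [mem_support, sinc_of_ne_zero ht_pos.ne']
  positivity

lemma one_sub_cos_mul_div_sq (c : ℝ) {t : ℝ} (ht : t ≠ 0) :
    (1 - cos (c * t)) / t ^ 2 = c ^ 2 / 2 * sinc (c / 2 * t) ^ 2 := by
  rcases eq_or_ne c 0 with rfl | hc
  · simp
  have half_angle : cos (c * t) = 1 - 2 * sin (c / 2 * t) ^ 2 := by
    rw [show c * t = 2 * (c / 2 * t) by ring, cos_two_mul, cos_sq']
    ring
  rw [sinc_of_ne_zero (by positivity), half_angle]
  field_simp
  ring

lemma integrableOn_one_sub_cos_mul_div_sq (c : ℝ) :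
    IntegrableOn (fun t ↦ (1 - cos (c * t)) / t ^ 2) (Ioi 0) := by
  suffices h : IntegrableOn (fun t ↦ c ^ 2 / 2 * sinc (c / 2 * t) ^ 2) (Ioi 0) from
    h.congr_fun (fun t ht ↦ (one_sub_cos_mul_div_sq c (ne_of_gt ht)).symm) measurableSet_Ioi
  rcases eq_or_ne c 0 with rfl | hc
  · simp
  · exact ((integrable_sinc_sq.comp_mul_left' (by positivity : c / 2 ≠ 0)).const_mul _).integrableOn

lemma setIntegral_one_sub_cos_mul_div_sq (c : ℝ) :
    ∫ t in Ioi (0 : ℝ), (1 - cos (c * t)) / t ^ 2 = |c| * sincSqIntegral := by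
  rcases eq_or_ne c 0 with rfl | hc
  · simp
  calc ∫ t in Ioi (0 : ℝ), (1 - cos (c * t)) / t ^ 2
      = ∫ t in Ioi (0 : ℝ), |c| ^ 2 / 2 * sinc (|c| / 2 * t) ^ 2 := by
        refine setIntegral_congr_fun measurableSet_Ioi fun t ht ↦ ?_
        rw [← one_sub_cos_mul_div_sq |c| (ne_of_gt ht)]
        rcases abs_choice c with h | h <;> simp only [h, neg_mul, cos_neg]
    _ = |c| * sincSqIntegral := by
        rw [integral_const_mul, integral_comp_mul_left_Ioi (fun t ↦ sinc t ^ 2) 0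
            (half_pos (abs_pos.2 hc)), mul_zero, smul_eq_mul, ← sincSqIntegral]
        field_simp

lemma abs_add_add_abs_sub (u v : ℝ) : |u + v| + |u - v| = 2 * max |u| |v| := by
  grind

lemma antitone_max_sub_max {p q : ℝ} (hpq : p ≤ q) : Antitone fun x ↦ max q x - max p x := by
  intro x y hxy
  grind

variable {a b : ℝ}

lemma integrableOn_sinc_mul_sinc (ha : a ≠ 0) (hb : b ≠ 0) :
    IntegrableOn (fun t ↦ sinc (a * t) * sinc (b * t)) (Ioi 0) := by
  have memLp {d : ℝ} (hd : d ≠ 0) : MemLp (fun t ↦ sinc (d * t)) 2 :=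
    (memLp_two_iff_integrable_sq (by fun_prop)).2 (integrable_sinc_sq.comp_mul_left' hd)
  exact ((memLp ha).integrable_mul (memLp hb)).integrableOn

lemma cosTransform_sinc_mul_sinc (ha : 0 < a) (hb : 0 < b) (x : ℝ) :
    cosTransform (fun t ↦ sinc (a * t) * sinc (b * t)) x =
      sincSqIntegral / (2 * a * b) * (max (a + b) |x| - max |a - b| |x|) := by
  let φ (c t : ℝ) : ℝ := (1 - cos (c * t)) / t ^ 2
  have hφ (c : ℝ) : IntegrableOn (φ c) (Ioi 0) := integrableOn_one_sub_cos_mul_div_sq c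
  have hφ_add (c d : ℝ) : IntegrableOn (fun t ↦ φ c t + φ d t) (Ioi 0) := (hφ c).add (hφ d)
  have product_to_sum : ∀ t ∈ Ioi (0 : ℝ), cos (x * t) * (sinc (a * t) * sinc (b * t)) =
      (4 * a * b)⁻¹ * ((φ (a + b + x) t + φ (a + b - x) t) -
        (φ (a - b + x) t + φ (a - b - x) t)) := by
    intro t (ht : 0 < t)
    simp only [φ, sinc_of_ne_zero (mul_pos ha ht).ne', sinc_of_ne_zero (mul_pos hb ht).ne',
      add_mul, sub_mul, cos_add, cos_sub, sin_add, sin_sub]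
    field_simp
    ring
  calc cosTransform (fun t ↦ sinc (a * t) * sinc (b * t)) x
      = (4 * a * b)⁻¹ * (((|a + b + x| + |a + b - x|) -
          (|a - b + x| + |a - b - x|)) * sincSqIntegral) := by
        rw [cosTransform, setIntegral_congr_fun measurableSet_Ioi product_to_sum,
          integral_const_mul, integral_sub (hφ_add _ _) (hφ_add _ _),
          integral_add (hφ _) (hφ _), integral_add (hφ _) (hφ _)]
        simp only [φ, setIntegral_one_sub_cos_mul_div_sq]
        ring
    _ = sincSqIntegral / (2 * a * b) * (max (a + b) |x| - max |a - b| |x|) := by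
        rw [abs_add_add_abs_sub, abs_add_add_abs_sub, abs_of_pos (add_pos ha hb)]
        field_simp
        ring

lemma setIntegral_sinc_mul_sinc (ha : 0 < a) (hb : 0 < b) :
    ∫ t in Ioi (0 : ℝ), sinc (a * t) * sinc (b * t) = sincSqIntegral / max a b := by
  rw [← cosTransform_zero, cosTransform_sinc_mul_sinc ha hb, abs_zero,
    max_eq_left (add_pos ha hb).le, max_eq_left (abs_nonneg _)]
  rcases le_total a b with hab | hab
  · rw [max_eq_right hab, abs_of_nonpos (sub_nonpos.2 hab)]
    field_simp
    ring
  · rw [max_eq_left hab, abs_of_nonneg (sub_nonneg.2 hab)]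
    field_simp
    ring

lemma hasUnimodalCosTransform_sinc_mul_sinc (ha : 0 < a) (hb : 0 < b) :
    HasUnimodalCosTransform fun t ↦ sinc (a * t) * sinc (b * t) := by
  refine ⟨integrableOn_sinc_mul_sinc ha.ne' hb.ne', fun x (hx : 0 ≤ x) y (hy : 0 ≤ y) hxy ↦ ?_⟩
  have := sincSqIntegral_pos
  have habs : |a - b| ≤ a + b := abs_le.2 ⟨by linarith, by linarith⟩
  rw [cosTransform_sinc_mul_sinc ha hb, cosTransform_sinc_mul_sinc ha hb, abs_of_nonneg hx,
    abs_of_nonneg hy]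
  exact mul_le_mul_of_nonneg_left (antitone_max_sub_max habs hxy) (by positivity)

lemma strictAntiOn_cosTransform_sinc_mul_sinc (ha : 0 < a) (hb : 0 < b) :
    StrictAntiOn (cosTransform fun t ↦ sinc (a * t) * sinc (b * t)) (Icc |a - b| (a + b)) := by
  have eqOn : EqOn (cosTransform fun t ↦ sinc (a * t) * sinc (b * t))
      (fun x ↦ sincSqIntegral / (2 * a * b) * (a + b - x)) (Icc |a - b| (a + b)) := by
    intro x hx
    rw [cosTransform_sinc_mul_sinc ha hb, abs_of_nonneg ((abs_nonneg _).trans hx.1),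
      max_eq_left hx.2, max_eq_right hx.1]
  have := sincSqIntegral_pos
  refine StrictAntiOn.congr (fun x _ y _ hxy ↦ ?_) eqOn.symm
  exact mul_lt_mul_of_pos_left (by linarith) (by positivity)

lemma antitoneOn_setIntegral_sinc_mul_sinc (hb : 0 < b) :
    AntitoneOn (fun a ↦ ∫ t in Ioi (0 : ℝ), sinc (a * t) * sinc (b * t)) (Ioi 0) := by
  intro a (ha : 0 < a) a' (ha' : 0 < a') haa'
  simp only [setIntegral_sinc_mul_sinc ha hb, setIntegral_sinc_mul_sinc ha' hb]
  exact div_le_div_of_nonneg_left sincSqIntegral_pos.le (lt_max_of_lt_left ha)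
    (max_le_max_right b haa')

end TwoFactors

section Products

variable {ι : Type*} {a : ι → ℝ} {c : ℝ}

lemma hasUnimodalCosTransform_prod_sinc {S : Finset ι} (ha : ∀ i ∈ S, 0 < a i)
    (hS : 2 ≤ S.card) :
    HasUnimodalCosTransform fun t ↦ ∏ i ∈ S, sinc (a i * t) := by
  classical
  induction S using Finset.induction_on with
  | empty => simp at hS
  | insert j S hj ih =>
    rw [Finset.card_insert_of_notMem hj] at hS
    rw [Finset.forall_mem_insert] at ha
    simp only [Finset.prod_insert hj]
    rcases Nat.lt_or_ge S.card 2 with hlt | hge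
    · obtain ⟨k, rfl⟩ := Finset.card_eq_one.1 (by lia : S.card = 1)
      simpa only [Finset.prod_singleton] using
        hasUnimodalCosTransform_sinc_mul_sinc ha.1 (ha.2 k (Finset.mem_singleton_self k))
    · exact (ih ha.2 hge).sinc_mul ha.1

lemma antitoneOn_setIntegral_sinc_mul_prod_sinc {S : Finset ι} (ha : ∀ i ∈ S, 0 < a i)
    (hS : S.Nonempty) :
    AntitoneOn (fun x ↦ ∫ t in Ioi (0 : ℝ), sinc (x * t) * ∏ i ∈ S, sinc (a i * t)) (Ioi 0) := by
  rcases Nat.lt_or_ge S.card 2 with hlt | hge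
  · obtain ⟨k, rfl⟩ := Finset.card_eq_one.1 (by have := hS.card_pos; lia : S.card = 1)
    simpa only [Finset.prod_singleton] using
      antitoneOn_setIntegral_sinc_mul_sinc (ha k (Finset.mem_singleton_self k))
  · exact (hasUnimodalCosTransform_prod_sinc ha hge).antitoneOn_setIntegral_sinc_mul

lemma hasUnimodalCosTransform_sinc_pow (hc : 0 < c) {k : ℕ} (hk : 2 ≤ k) :
    HasUnimodalCosTransform fun t ↦ sinc (c * t) ^ k := by
  simpa using hasUnimodalCosTransform_prod_sinc (a := fun _ : Fin k ↦ c) (S := .univ)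
    (fun _ _ ↦ hc) (by simpa)

lemma strictAntiOn_cosTransform_sinc_pow (hc : 0 < c) {k : ℕ} (hk : 2 ≤ k) :
    StrictAntiOn (cosTransform fun t ↦ sinc (c * t) ^ k) (Icc 0 c) := by
  induction k, hk using Nat.le_induction with
  | base =>
    simp only [sq]
    refine (strictAntiOn_cosTransform_sinc_mul_sinc hc hc).mono (Icc_subset_Icc ?_ ?_)
    · simp
    · linarith
  | succ k hk ih =>
    simp only [pow_succ']
    exact (hasUnimodalCosTransform_sinc_pow hc hk).strictAntiOn_cosTransform_sinc_mul hc ih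

variable [Fintype ι]

/-- The integral of a product of dilated sinc functions as a function of the dilation factors. It
takes `sinc` rather than `sin x / x`, so that a factor `0` contributes the value `1`. -/
noncomputable def sincProdIntegral (a : ι → ℝ) : ℝ := ∫ t in Ioi (0 : ℝ), ∏ i, sinc (a i * t)

lemma sincProdIntegral_abs (a : ι → ℝ) : sincProdIntegral |a| = sincProdIntegral a := by
  simp only [sincProdIntegral, Pi.abs_apply, sinc_abs_mul]

lemma mul_sincProdIntegral_const (hc : 0 < c) :
    c * sincProdIntegral (fun _ : ι ↦ c) = ∫ t in Ioi (0 : ℝ), sinc t ^ Fintype.card ι := by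
  simpa [sincProdIntegral] using
    integral_comp_mul_left_Ioi' (fun t ↦ sinc t ^ Fintype.card ι) 0 hc

lemma sincProdIntegral_update [DecidableEq ι] (a : ι → ℝ) (j : ι) (x : ℝ) :
    sincProdIntegral (update a j x) =
      ∫ t in Ioi (0 : ℝ), sinc (x * t) * ∏ i ∈ {j}ᶜ, sinc (a i * t) := by
  unfold sincProdIntegral
  congr 1 with t
  rw [Fintype.prod_eq_mul_prod_compl j, update_self]
  congr 1
  refine Finset.prod_congr rfl fun i hi ↦ ?_
  rw [update_of_ne (by simpa using hi)]

lemma antitoneOn_sincProdIntegral_update [DecidableEq ι] (hι : 2 ≤ Fintype.card ι)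
    (ha : ∀ i, 0 < a i) (j : ι) :
    AntitoneOn (fun x ↦ sincProdIntegral (update a j x)) (Ioi 0) := by
  simp only [sincProdIntegral_update]
  refine antitoneOn_setIntegral_sinc_mul_prod_sinc (fun i _ ↦ ha i) (Finset.card_pos.1 ?_)
  rw [Finset.card_compl, Finset.card_singleton]
  lia

lemma antitoneOn_sincProdIntegral (hι : 2 ≤ Fintype.card ι) :
    AntitoneOn (sincProdIntegral (ι := ι)) {a | ∀ i, 0 < a i} := by
  classical
  intro a ha b hb hab
  have piecewise_le (T : Finset ι) : sincProdIntegral (T.piecewise b a) ≤ sincProdIntegral a := by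
    induction T using Finset.induction_on with
    | empty => rw [Finset.piecewise_empty]
    | insert j T hj ih =>
      refine le_trans ?_ ih
      have pos (i : ι) : 0 < T.piecewise b a i := T.piecewise_cases b a (0 < ·) (hb i) (ha i)
      have hj_eq : T.piecewise b a j = a j := T.piecewise_eq_of_notMem b a hj
      simpa [Finset.piecewise_insert, ← hj_eq] using
        antitoneOn_sincProdIntegral_update hι pos j (ha j) (hb j) (hab j)
  simpa only [Finset.piecewise_univ] using piecewise_le Finset.univ

lemma strictAntiOn_sincProdIntegral_update_const [DecidableEq ι] (hι : 3 ≤ Fintype.card ι)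
    (hc : 0 < c) (j : ι) :
    StrictAntiOn (fun x ↦ sincProdIntegral (update (fun _ ↦ c) j x)) (Ioc 0 c) := by
  have hk : 2 ≤ Fintype.card ι - 1 := by lia
  simpa only [sincProdIntegral_update, Finset.prod_const, Finset.card_compl,
    Finset.card_singleton] using strictAntiOn_setIntegral_sinc_mul
      (hasUnimodalCosTransform_sinc_pow hc hk).integrableOn
      (strictAntiOn_cosTransform_sinc_pow hc hk)

lemma sincProdIntegral_of_card_eq_two (hι : Fintype.card ι = 2) (ha : ∀ i, 0 < a i) :
    sincProdIntegral a = sincSqIntegral / ‖a‖ := by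
  classical
  obtain ⟨j, k, hjk, huniv⟩ := Finset.card_eq_two.1 (Finset.card_univ.trans hι)
  have norm_eq : ‖a‖ = max (a j) (a k) := by
    simp [Pi.norm_def, huniv, abs_of_pos (ha _)]
  simp only [sincProdIntegral, huniv, Finset.prod_pair hjk, norm_eq]
  exact setIntegral_sinc_mul_sinc (ha j) (ha k)

lemma apply_le_pi_norm (a : ι → ℝ) (i : ι) : a i ≤ ‖a‖ :=
  (le_norm_self _).trans (norm_le_pi_norm a i)

lemma sincProdIntegral_const_norm_le (hι : 2 ≤ Fintype.card ι) (ha : ∀ i, 0 < a i) :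
    sincProdIntegral (fun _ : ι ↦ ‖a‖) ≤ sincProdIntegral a :=
  antitoneOn_sincProdIntegral hι ha (fun i ↦ (ha i).trans_le (apply_le_pi_norm a i))
    (apply_le_pi_norm a)

lemma sincProdIntegral_const_norm_lt (hι : 3 ≤ Fintype.card ι) (ha : ∀ i, 0 < a i) {j : ι}
    (hj : a j < ‖a‖) : sincProdIntegral (fun _ : ι ↦ ‖a‖) < sincProdIntegral a := by
  classical
  have norm_pos : 0 < ‖a‖ := (ha j).trans hj
  have le_update : a ≤ update (fun _ ↦ ‖a‖) j (a j) := by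
    rw [le_update_iff]
    exact ⟨le_rfl, fun i _ ↦ apply_le_pi_norm a i⟩
  calc sincProdIntegral (fun _ : ι ↦ ‖a‖)
      = sincProdIntegral (update (fun _ ↦ ‖a‖) j ‖a‖) := by rw [update_eq_self_iff.2 rfl]
    _ < sincProdIntegral (update (fun _ ↦ ‖a‖) j (a j)) :=
        strictAntiOn_sincProdIntegral_update_const hι norm_pos j ⟨ha j, hj.le⟩
          ⟨norm_pos, le_rfl⟩ hj
    _ ≤ sincProdIntegral a :=
        antitoneOn_sincProdIntegral (by lia) ha (fun i ↦ (ha i).trans_le (le_update i)) le_update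

lemma sincProdIntegral_eq_const_norm_iff (hι : 2 ≤ Fintype.card ι) (ha : ∀ i, 0 < a i) :
    sincProdIntegral a = sincProdIntegral (fun _ : ι ↦ ‖a‖) ↔
      Fintype.card ι = 2 ∨ ∀ i, a i = ‖a‖ := by
  constructor
  · contrapose!
    rintro ⟨hcard, j, hj⟩
    have hlt : a j < ‖a‖ := lt_of_le_of_ne (apply_le_pi_norm a j) hj
    exact (sincProdIntegral_const_norm_lt (by lia) ha hlt).ne'
  · rintro (hcard | hconst)
    · have : Nonempty ι := Fintype.card_pos_iff.1 (by lia)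
      have norm_pos : 0 < ‖a‖ := (ha (Classical.arbitrary ι)).trans_le (apply_le_pi_norm a _)
      rw [sincProdIntegral_of_card_eq_two hcard ha,
        sincProdIntegral_of_card_eq_two hcard fun _ ↦ norm_pos, pi_norm_const, norm_norm]
    · rw [← funext hconst]

lemma setIntegral_prod_sin_div (ha : ∀ i, a i ≠ 0) :
    ∫ t in Ioi (0 : ℝ), ∏ i, sin (a i * t) / (a i * t) = sincProdIntegral a :=
  setIntegral_congr_fun measurableSet_Ioi fun _ ht ↦ Finset.prod_congr rfl fun i _ ↦
    (sinc_of_ne_zero (mul_ne_zero (ha i) (ne_of_gt ht))).symm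

lemma setIntegral_sin_div_pow (n : ℕ) :
    ∫ t in Ioi (0 : ℝ), (sin t / t) ^ n = ∫ t in Ioi (0 : ℝ), sinc t ^ n :=
  setIntegral_congr_fun measurableSet_Ioi fun _ ht ↦ by rw [sinc_of_ne_zero (ne_of_gt ht)]

theorem sinc_product_inequality_general (hι : 2 ≤ Fintype.card ι) (s : ι → ℝ)
    (hs : ∀ i, s i ≠ 0) :
    (∫ t in Ioi (0 : ℝ), (sin t / t) ^ Fintype.card ι) ≤
      ‖s‖ * ∫ t in Ioi (0 : ℝ), ∏ i, sin (s i * t) / (s i * t) ∧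
    (‖s‖ * ∫ t in Ioi (0 : ℝ), ∏ i, sin (s i * t) / (s i * t) =
        ∫ t in Ioi (0 : ℝ), (sin t / t) ^ Fintype.card ι ↔
      Fintype.card ι = 2 ∨ ∀ i, |s i| = ‖s‖) := by
  have abs_pos (i : ι) : 0 < |s| i := abs_pos.2 (hs i)
  have norm_abs : ‖|s|‖ = ‖s‖ := by simp [Pi.norm_def]
  have : Nonempty ι := Fintype.card_pos_iff.1 (by lia)
  have norm_pos : 0 < ‖s‖ := norm_pos_iff.2 fun h ↦ hs (Classical.arbitrary ι) (congrFun h _)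
  rw [setIntegral_prod_sin_div hs, setIntegral_sin_div_pow, ← mul_sincProdIntegral_const norm_pos,
    mul_le_mul_iff_right₀ norm_pos, mul_right_inj' norm_pos.ne', ← sincProdIntegral_abs s,
    ← norm_abs]
  exact ⟨sincProdIntegral_const_norm_le hι abs_pos, sincProdIntegral_eq_const_norm_iff hι abs_pos⟩

end Products

theorem sinc_product_inequality (n : ℕ) (hn : 2 ≤ n) (s : EuclideanSpace ℝ (Fin n))
    (hs : ‖s‖ = 1) (h0 : ∀ i, s i ≠ 0) :
    maxNorm s * (∫ t in Set.Ioi (0:ℝ), ∏ i, Real.sin (s i * t) / (s i * t)) ≥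
      (∫ t in Set.Ioi (0:ℝ), (Real.sin t / t) ^ n) ∧
    (maxNorm s * (∫ t in Set.Ioi (0:ℝ), ∏ i, Real.sin (s i * t) / (s i * t)) =
        (∫ t in Set.Ioi (0:ℝ), (Real.sin t / t) ^ n) →
      n = 2 ∨ ∀ i, |s i| = maxNorm s) := by
  have h := sinc_product_inequality_general (by rwa [Fintype.card_fin]) (WithLp.equiv 2 _ s) h0
  rw [Fintype.card_fin] at h
  exact ⟨h.1, h.2.1⟩
end

section
/- For any nonzero a ∈ ℤⁿ with n ≥ 5, there exist n−1 linearly independent vectors x₁, …, x_{n−1} ∈ ℤⁿ with a·x_i = 0 for all i and ‖x₁‖_∞ ⋯ ‖x_{n−1}‖_∞ < ‖a‖_∞ / σ_n. -/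
open MeasureTheory

noncomputable def sigma (n : ℕ) : ℝ :=
  (2 / Real.pi) * ∫ t in Set.Ioi (0:ℝ), (Real.sin t / t) ^ n

/-!
The vectors `x₁, …, x_{n-1}` realise the successive minima of the integer solutions of `a ⬝ᵥ x = 0`
for the maximum norm. As in Minkowski's second theorem, squeezing a convex body along the flag of
their spans gives a set of volume `(∏ ‖xᵢ‖) / N ^ (n - 1)` times that of the body, whose
differences contain no nonzero integer vector, so that this volume is at most `1`. The body is the
slab `|a ⬝ᵥ x| < 1 / 2` of the cube `‖x‖ < N / 2` with `N` large.

Its volume is at least about `N ^ (n - 1) * σ_n / ‖a‖`: after scaling, it is the mass near `0` of a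
sum of independent uniform variables on `[-|aᵢ|, |aᵢ|]`. Averaging symmetric decreasing
densities over shorter intervals only increases the value at `0`, and when all `|aᵢ|` are equal
this value is the B-spline value `σ_n`, by Fourier inversion. The comparison is strict as soon as
some `|aᵢ| < ‖a‖`; otherwise the vectors `± e₀ ± eᵢ` of norm `1` suffice because `σ_n < 1`.
-/

/-! ### Symmetric decreasing functions and moving averages -/

/-- The uniform probability measure on `(-1, 1]`. -/
noncomputable def symmUniform : Measure ℝ := ProbabilityTheory.cond volume (Set.Ioc (-1) 1)

instance : IsProbabilityMeasure symmUniform :=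
  ProbabilityTheory.cond_isProbabilityMeasure_of_finite (by simp) (by simp)

lemma symmUniform_eq : symmUniform = (2 : ENNReal)⁻¹ • volume.restrict (Set.Ioc (-1) 1) := by
  rw [symmUniform, ProbabilityTheory.cond, Real.volume_Ioc]
  norm_num

lemma integral_symmUniform (f : ℝ → ℝ) :
    ∫ u, f u ∂symmUniform = 2⁻¹ * ∫ u in (-1 : ℝ)..1, f u := by
  rw [symmUniform_eq, integral_smul_measure, intervalIntegral.integral_of_le (by norm_num)]
  simp

/-- Nonnegative functions on the line that are even and nonincreasing in `|x|`. -/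
structure IsSymmDecreasing (h : ℝ → ℝ) : Prop where
  nonneg : ∀ x, 0 ≤ h x
  le_of_abs_le : ∀ {x y}, |x| ≤ |y| → h y ≤ h x

namespace IsSymmDecreasing

variable {h : ℝ → ℝ}

lemma apply_abs (hh : IsSymmDecreasing h) (x : ℝ) : h |x| = h x :=
  le_antisymm (hh.le_of_abs_le (abs_abs x).ge) (hh.le_of_abs_le (abs_abs x).le)

lemma apply_neg (hh : IsSymmDecreasing h) (x : ℝ) : h (-x) = h x := by
  rw [← hh.apply_abs, abs_neg, hh.apply_abs]

lemma le_apply_zero (hh : IsSymmDecreasing h) (x : ℝ) : h x ≤ h 0 :=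
  hh.le_of_abs_le (by simp)

lemma measurable (hh : IsSymmDecreasing h) : Measurable h := by
  have anti : Antitone fun x => h (max x 0) := fun x y hxy => hh.le_of_abs_le <| by
    rw [abs_of_nonneg (le_max_right x 0), abs_of_nonneg (le_max_right y 0)]
    exact max_le_max hxy le_rfl
  have factor : h = (fun x => h (max x 0)) ∘ fun x => |x| := by
    ext x
    simp [hh.apply_abs]
  rw [factor]
  exact anti.measurable.comp measurable_id.abs

lemma integrable_comp (hh : IsSymmDecreasing h) {α : Type*} [MeasurableSpace α] {μ : Measure α}
    [IsFiniteMeasure μ] {f : α → ℝ} (hf : Measurable f) : Integrable (fun u => h (f u)) μ :=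
  .of_bound (hh.measurable.comp hf).aestronglyMeasurable (h 0) <| .of_forall fun _ => by
    rw [Real.norm_of_nonneg (hh.nonneg _)]
    exact hh.le_apply_zero _

lemma intervalIntegrable_comp (hh : IsSymmDecreasing h) {f : ℝ → ℝ} (hf : Measurable f) (a b : ℝ) :
    IntervalIntegrable (fun u => h (f u)) volume a b :=
  ⟨hh.integrable_comp hf, hh.integrable_comp hf⟩

lemma intervalIntegrable (hh : IsSymmDecreasing h) (a b : ℝ) :
    IntervalIntegrable h volume a b :=
  hh.intervalIntegrable_comp measurable_id a b

end IsSymmDecreasing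

/-- The indicator function of `(-δ, δ)`. -/
noncomputable def symmIndicator (δ : ℝ) : ℝ → ℝ := (Set.Ioo (-δ) δ).indicator 1

lemma symmIndicator_apply (δ x : ℝ) : symmIndicator δ x = if |x| < δ then 1 else 0 := by
  simp [symmIndicator, Set.indicator_apply, abs_lt]

lemma isSymmDecreasing_symmIndicator (δ : ℝ) : IsSymmDecreasing (symmIndicator δ) where
  nonneg x := Set.indicator_nonneg (fun _ _ => zero_le_one) x
  le_of_abs_le {x y} hxy := by
    simp only [symmIndicator_apply]
    split_ifs with hy hx <;> linarith

lemma integrable_symmIndicator (δ : ℝ) : Integrable (symmIndicator δ) :=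
  (integrable_indicator_iff measurableSet_Ioo).2 (by simp [Pi.one_def])

/-- The mean of `h` over the interval of radius `|c|` around `x`, normalised so that radius `0`
gives `h` back. -/
noncomputable def movingAverage (c : ℝ) (h : ℝ → ℝ) (x : ℝ) : ℝ := ∫ u, h (x + c * u) ∂symmUniform

lemma movingAverage_zero_left (h : ℝ → ℝ) : movingAverage 0 h = h := by
  ext x
  simp [movingAverage]

lemma movingAverage_neg_left (c : ℝ) (h : ℝ → ℝ) : movingAverage (-c) h = movingAverage c h := by
  ext x
  rw [movingAverage, movingAverage, integral_symmUniform, integral_symmUniform]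
  simpa using intervalIntegral.integral_comp_neg (a := -1) (b := 1) fun u => h (x + c * u)

lemma movingAverage_abs_left (c : ℝ) (h : ℝ → ℝ) : movingAverage |c| h = movingAverage c h := by
  rcases abs_choice c with hc | hc <;> simp only [hc, movingAverage_neg_left]

lemma movingAverage_const_mul (c r : ℝ) (h : ℝ → ℝ) :
    movingAverage c (fun y => r * h y) = fun x => r * movingAverage c h x :=
  funext fun _ => integral_const_mul _ _

lemma movingAverage_eq_intervalIntegral {c : ℝ} (hc : c ≠ 0) (h : ℝ → ℝ) (x : ℝ) :
    movingAverage c h x = (2 * c)⁻¹ * ∫ s in (x - c)..(x + c), h s := by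
  rw [movingAverage, integral_symmUniform, intervalIntegral.integral_comp_add_mul _ hc, smul_eq_mul,
    mul_inv, mul_assoc]
  simp [sub_eq_add_neg]

lemma mul_movingAverage_eq_integral {c : ℝ} (hc : 0 < c) (h : ℝ → ℝ) (x : ℝ) :
    c * movingAverage c h x = 2⁻¹ * ∫ s, symmIndicator c (x - s) * h s := by
  have product_eq (s : ℝ) :
      symmIndicator c (x - s) * h s = (Set.Ioo (x - c) (x + c)).indicator h s := by
    have : |x - s| < c ↔ s ∈ Set.Ioo (x - c) (x + c) := by
      rw [abs_lt, Set.mem_Ioo]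
      constructor <;> rintro ⟨_, _⟩ <;> constructor <;> linarith
    simp [symmIndicator_apply, Set.indicator_apply, this]
  simp_rw [product_eq]
  rw [movingAverage_eq_intervalIntegral hc.ne', integral_indicator measurableSet_Ioo,
    intervalIntegral.integral_of_le (by linarith), integral_Ioc_eq_integral_Ioo]
  field_simp

/-- Both sides are half the length of `(x - c, x + c) ∩ (-d, d)`. -/
lemma mul_movingAverage_symmIndicator_comm {c d : ℝ} (hc : 0 < c) (hd : 0 < d) (x : ℝ) :
    c * movingAverage c (symmIndicator d) x = d * movingAverage d (symmIndicator c) x := by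
  rw [mul_movingAverage_eq_integral hc, mul_movingAverage_eq_integral hd,
    ← integral_sub_left_eq_self _ volume x]
  simp only [sub_sub_cancel, mul_comm]

section

variable {h : ℝ → ℝ}

lemma movingAverage_comm (hh : IsSymmDecreasing h) (c d : ℝ) :
    movingAverage c (movingAverage d h) = movingAverage d (movingAverage c h) := by
  ext x
  simp only [movingAverage]
  rw [integral_integral_swap (hh.integrable_comp (by fun_prop))]
  simp only [add_right_comm]

lemma continuous_movingAverage (hh : IsSymmDecreasing h) {c : ℝ} (hc : c ≠ 0) :
    Continuous (movingAverage c h) := by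
  have primitive_sub : movingAverage c h =
      fun x => (2 * c)⁻¹ * ((∫ s in (0 : ℝ)..(x + c), h s) - ∫ s in (0 : ℝ)..(x - c), h s) := by
    ext x
    rw [movingAverage_eq_intervalIntegral hc, intervalIntegral.integral_interval_sub_left
      (hh.intervalIntegrable _ _) (hh.intervalIntegrable _ _)]
  have primitive := intervalIntegral.continuous_primitive hh.intervalIntegrable 0
  rw [primitive_sub]
  exact continuous_const.mul ((primitive.comp (by fun_prop)).sub
    (primitive.comp (by fun_prop)))

lemma movingAverage_sub_movingAverage (hh : IsSymmDecreasing h) {c : ℝ} (hc : c ≠ 0) (x y : ℝ) :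
    movingAverage c h x - movingAverage c h y =
      (2 * c)⁻¹ * ∫ s in x..y, (h (s - c) - h (s + c)) := by
  have hi := hh.intervalIntegrable
  rw [movingAverage_eq_intervalIntegral hc, movingAverage_eq_intervalIntegral hc, ← mul_sub,
    intervalIntegral.integral_sub (hh.intervalIntegrable_comp (by fun_prop) _ _)
      (hh.intervalIntegrable_comp (by fun_prop) _ _),
    intervalIntegral.integral_comp_sub_right, intervalIntegral.integral_comp_add_right,
    intervalIntegral.integral_interval_sub_interval_comm (hi _ _) (hi _ _) (hi _ _)]

lemma IsSymmDecreasing.apply_add_le_apply_sub (hh : IsSymmDecreasing h) {c s : ℝ} (hc : 0 ≤ c)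
    (hs : 0 ≤ s) : h (s + c) ≤ h (s - c) :=
  hh.le_of_abs_le <| by
    rw [abs_of_nonneg (add_nonneg hs hc), abs_le]
    constructor <;> linarith

lemma antitoneOn_movingAverage (hh : IsSymmDecreasing h) (c : ℝ) :
    AntitoneOn (movingAverage c h) (Set.Ici 0) := by
  intro x hx y _ hxy
  rw [Set.mem_Ici] at hx
  rw [← movingAverage_abs_left]
  rcases (abs_nonneg c).eq_or_lt with hc | hc
  · rw [← hc, movingAverage_zero_left]
    exact hh.le_of_abs_le (abs_le_abs_of_nonneg hx hxy)
  · rw [← sub_nonneg, movingAverage_sub_movingAverage hh hc.ne']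
    refine mul_nonneg (by positivity) (intervalIntegral.integral_nonneg hxy fun s hs => ?_)
    exact sub_nonneg.2 (hh.apply_add_le_apply_sub hc.le (hx.trans hs.1))

lemma isSymmDecreasing_movingAverage (hh : IsSymmDecreasing h) (c : ℝ) :
    IsSymmDecreasing (movingAverage c h) := by
  have even (x : ℝ) : movingAverage c h (-x) = movingAverage c h x := by
    have reflect (u : ℝ) : h (-x + c * u) = h (x + -c * u) := by
      rw [← hh.apply_neg, neg_add, neg_neg, neg_mul]
    calc
      movingAverage c h (-x) = movingAverage (-c) h x := integral_congr_ae (.of_forall reflect)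
      _ = movingAverage c h x := by rw [movingAverage_neg_left]
  have apply_abs (x : ℝ) : movingAverage c h |x| = movingAverage c h x := by
    rcases abs_choice x with hx | hx <;> simp only [hx, even]
  refine ⟨fun x => integral_nonneg fun u => hh.nonneg _, fun {x y} hxy => ?_⟩
  rw [← apply_abs x, ← apply_abs y]
  exact antitoneOn_movingAverage hh c (abs_nonneg x) (abs_nonneg y) hxy

lemma movingAverage_apply_zero_le (hh : IsSymmDecreasing h) {c d : ℝ} (hcd : |c| ≤ |d|) :
    movingAverage d h 0 ≤ movingAverage c h 0 :=
  integral_mono (hh.integrable_comp (by fun_prop)) (hh.integrable_comp (by fun_prop)) fun u =>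
    hh.le_of_abs_le <| by
      simp only [zero_add, abs_mul]
      gcongr

lemma apply_le_movingAverage_apply_zero (hh : IsSymmDecreasing h) (c : ℝ) :
    h c ≤ movingAverage c h 0 := by
  rw [movingAverage, integral_symmUniform]
  have bound : ∫ _ in (-1 : ℝ)..1, h c ≤ ∫ u in (-1 : ℝ)..1, h (0 + c * u) :=
    intervalIntegral.integral_mono_on (by norm_num) (by simp)
      (hh.intervalIntegrable_comp (by fun_prop) _ _) fun u hu => hh.le_of_abs_le <| by
        rw [zero_add, abs_mul]
        exact mul_le_of_le_one_right (abs_nonneg c) (abs_le.2 hu)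
  rw [intervalIntegral.integral_const, smul_eq_mul] at bound
  linarith

lemma strictAntiOn_movingAverage_one (hh : IsSymmDecreasing h)
    (hlt : ∀ s ∈ Set.Ioo (0 : ℝ) 1, h (s + 1) < h (s - 1)) :
    StrictAntiOn (movingAverage 1 h) (Set.Icc 0 1) := by
  intro x hx y hy hxy
  rw [← sub_pos, movingAverage_sub_movingAverage hh one_ne_zero]
  refine mul_pos (by norm_num) (intervalIntegral.intervalIntegral_pos_of_pos_on ?_ ?_ hxy)
  · exact (hh.intervalIntegrable_comp (by fun_prop) _ _).sub
      (hh.intervalIntegrable_comp (by fun_prop) _ _)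
  · intro s hs
    exact sub_pos.2 (hlt s ⟨hx.1.trans_lt hs.1, hs.2.trans_le hy.2⟩)

lemma movingAverage_one_apply_zero_lt (hh : IsSymmDecreasing h)
    (hanti : StrictAntiOn h (Set.Icc 0 1)) {c : ℝ} (hc : |c| < 1) :
    movingAverage 1 h 0 < movingAverage c h 0 := by
  have hi (d : ℝ) := hh.intervalIntegrable_comp (f := fun u => 0 + d * u) (by fun_prop)
  have le (u : ℝ) : h (0 + 1 * u) ≤ h (0 + c * u) := hh.le_of_abs_le <| by
    simpa [abs_mul] using mul_le_of_le_one_left (abs_nonneg u) hc.le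
  have lt (u : ℝ) (hu : u ∈ Set.Ioo 0 1) : h (0 + 1 * u) < h (0 + c * u) := by
    have : |c| * u < u := mul_lt_of_lt_one_left hu.1 hc
    rw [← hh.apply_abs (0 + c * u), zero_add, zero_add, one_mul, abs_mul, abs_of_pos hu.1]
    exact hanti ⟨mul_nonneg (abs_nonneg c) hu.1.le, this.le.trans hu.2.le⟩ ⟨hu.1.le, hu.2.le⟩ this
  simp only [movingAverage, integral_symmUniform]
  rw [← intervalIntegral.integral_add_adjacent_intervals (hi 1 (-1) 0) (hi 1 0 1),
    ← intervalIntegral.integral_add_adjacent_intervals (hi c (-1) 0) (hi c 0 1)]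
  have left := intervalIntegral.integral_mono (by norm_num) (hi 1 (-1) 0) (hi c (-1) 0) le
  have right : 0 < ∫ u in (0 : ℝ)..1, (h (0 + c * u) - h (0 + 1 * u)) :=
    intervalIntegral.intervalIntegral_pos_of_pos_on ((hi c 0 1).sub (hi 1 0 1))
      (fun u hu => sub_pos.2 (lt u hu)) one_pos
  rw [intervalIntegral.integral_sub (hi c 0 1) (hi 1 0 1)] at right
  linarith

end

/-! ### Cardinal B-splines and the sinc integrals -/

open scoped FourierTransform Convolution Topology

lemma movingAverage_eq_convolution {c : ℝ} (hc : 0 < c) (h : ℝ → ℝ) :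
    movingAverage c h =
      (2 * c)⁻¹ • (symmIndicator c ⋆[ContinuousLinearMap.mul ℝ ℝ, volume] h) := by
  ext x
  rw [Pi.smul_apply, convolution_mul_swap, smul_eq_mul, mul_inv_rev, mul_assoc,
    ← mul_movingAverage_eq_integral hc, inv_mul_cancel_left₀ hc.ne']

lemma integrable_movingAverage {c : ℝ} (hc : 0 < c) {h : ℝ → ℝ} (hh : Integrable h) :
    Integrable (movingAverage c h) := by
  rw [movingAverage_eq_convolution hc]
  exact ((integrable_symmIndicator c).integrable_convolution _ hh).smul _

lemma fourier_ofReal_symmIndicator {c : ℝ} (hc : 0 ≤ c) (w : ℝ) :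
    𝓕 (fun x => (symmIndicator c x : ℂ)) w = 2 * c * Real.sinc (2 * Real.pi * c * w) := by
  have integrand (x : ℝ) : Complex.exp (↑(-2 * Real.pi * x * w) * Complex.I) •
      (symmIndicator c x : ℂ) = (Set.Ioo (-c) c).indicator
        (fun x => Complex.exp (↑(-2 * Real.pi * w * x) * Complex.I)) x := by
    simp only [symmIndicator, Set.indicator_apply]
    split_ifs <;> simp [mul_right_comm]
  simp_rw [Real.fourier_real_eq_integral_exp_smul, integrand]
  rw [integral_indicator measurableSet_Ioo, ← integral_Ioc_eq_integral_Ioo,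
    ← intervalIntegral.integral_of_le (by linarith)]
  rcases eq_or_ne w 0 with rfl | hw
  · simp [two_mul]
  have rescale := intervalIntegral.integral_comp_mul_left (a := -c) (b := c)
    (fun t : ℝ => Complex.exp (t * Complex.I)) (c := -2 * Real.pi * w) (by simp [hw])
  have arg : -2 * Real.pi * w * c = -(2 * Real.pi * c * w) := by ring
  have ne : (w : ℂ) ≠ 0 := Complex.ofReal_ne_zero.2 hw
  rw [rescale, mul_neg, integral_exp_mul_I_eq_sinc, arg, Real.sinc_neg, Complex.real_smul]
  push_cast
  field_simp

lemma fourier_ofReal_movingAverage {c : ℝ} (hc : 0 < c) {h : ℝ → ℝ} (hh : Integrable h) (w : ℝ) :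
    𝓕 (fun x => (movingAverage c h x : ℂ)) w =
      Real.sinc (2 * Real.pi * c * w) * 𝓕 (fun x => (h x : ℂ)) w := by
  have complexify : (fun x => (movingAverage c h x : ℂ)) = ((2 * c)⁻¹ : ℂ) •
      ((fun x => (symmIndicator c x : ℂ)) ⋆[ContinuousLinearMap.mul ℂ ℂ, volume]
        fun x => (h x : ℂ)) := by
    ext x
    simp only [movingAverage_eq_convolution hc, Pi.smul_apply, convolution_mul, smul_eq_mul,
      Complex.ofReal_mul, ← integral_complex_ofReal]
    push_cast
    rfl
  have fourier_const_smul (r : ℂ) (g : ℝ → ℂ) : 𝓕 (r • g) w = r * 𝓕 g w :=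
    congrFun (VectorFourier.fourierIntegral_const_smul Real.fourierChar volume (innerₗ ℝ) g r) w
  have fourier_convolution := Real.fourier_mul_convolution_eq (R := ℂ)
    (f₁ := fun x => (symmIndicator c x : ℂ)) (f₂ := fun x => (h x : ℂ))
    (integrable_symmIndicator c).ofReal hh.ofReal w
  have ne : (c : ℂ) ≠ 0 := Complex.ofReal_ne_zero.2 hc.ne'
  rw [complexify, fourier_const_smul, fourier_convolution, fourier_ofReal_symmIndicator hc.le]
  field_simp

/-- The centred cardinal B-spline of degree `m` with knots spaced by `2`, normalised to be twice the
density of a sum of `m + 1` independent uniform variables on `(-1, 1)`. -/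
noncomputable def bspline (m : ℕ) : ℝ → ℝ := (movingAverage 1)^[m] (symmIndicator 1)

lemma bspline_succ (m : ℕ) : bspline (m + 1) = movingAverage 1 (bspline m) :=
  Function.iterate_succ_apply' _ _ _

lemma isSymmDecreasing_bspline (m : ℕ) : IsSymmDecreasing (bspline m) := by
  induction m with
  | zero => exact isSymmDecreasing_symmIndicator 1
  | succ m ih => exact bspline_succ m ▸ isSymmDecreasing_movingAverage ih 1

lemma integrable_bspline (m : ℕ) : Integrable (bspline m) := by
  induction m with
  | zero => exact integrable_symmIndicator 1
  | succ m ih => exact bspline_succ m ▸ integrable_movingAverage one_pos ih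

lemma continuous_bspline_succ (m : ℕ) : Continuous (bspline (m + 1)) :=
  bspline_succ m ▸ continuous_movingAverage (isSymmDecreasing_bspline m) one_ne_zero

lemma bspline_apply_zero_le_one (m : ℕ) : bspline m 0 ≤ 1 := by
  induction m with
  | zero => simp [bspline, symmIndicator_apply]
  | succ m ih =>
    rw [bspline_succ]
    calc
      movingAverage 1 (bspline m) 0 ≤ movingAverage 0 (bspline m) 0 :=
        movingAverage_apply_zero_le (isSymmDecreasing_bspline m) (by simp)
      _ ≤ 1 := by rwa [movingAverage_zero_left]

lemma strictAntiOn_bspline_succ (m : ℕ) : StrictAntiOn (bspline (m + 1)) (Set.Icc 0 1) := by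
  induction m with
  | zero =>
    rw [bspline_succ]
    refine strictAntiOn_movingAverage_one (isSymmDecreasing_bspline 0) fun s hs => ?_
    have outside : ¬|s + 1| < 1 := by rw [abs_of_pos] <;> linarith [hs.1]
    have inside : |s - 1| < 1 := by rw [abs_lt]; constructor <;> linarith [hs.1, hs.2]
    simp [bspline, symmIndicator_apply, outside, inside]
  | succ m ih =>
    have hB := isSymmDecreasing_bspline (m + 1)
    rw [bspline_succ]
    refine strictAntiOn_movingAverage_one hB fun s hs => ?_
    calc
      bspline (m + 1) (s + 1) ≤ bspline (m + 1) 1 := hB.le_of_abs_le <| by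
        rw [abs_one, abs_of_pos] <;> linarith [hs.1]
      _ < bspline (m + 1) (1 - s) :=
        ih ⟨by linarith [hs.2], by linarith [hs.1]⟩ (by simp) (by linarith [hs.1])
      _ = bspline (m + 1) (s - 1) := by rw [← hB.apply_neg, neg_sub]

lemma fourier_ofReal_bspline (m : ℕ) (w : ℝ) :
    𝓕 (fun x => (bspline m x : ℂ)) w = (2 * Real.sinc (2 * Real.pi * w) ^ (m + 1) : ℝ) := by
  induction m with
  | zero => simpa [bspline] using fourier_ofReal_symmIndicator zero_le_one w
  | succ m ih =>
    rw [bspline_succ, fourier_ofReal_movingAverage one_pos (integrable_bspline m), ih]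
    push_cast
    ring_nf

lemma integrable_sinc_pow {n : ℕ} (hn : 2 ≤ n) : Integrable fun t => Real.sinc t ^ n := by
  have mul_sinc (t : ℝ) : t * Real.sinc t = Real.sin t := by
    rcases eq_or_ne t 0 with rfl | ht
    · simp
    · rw [Real.sinc_of_ne_zero ht, mul_div_cancel₀ _ ht]
  refine (integrable_inv_one_add_sq.const_mul 2).mono'
    (Real.continuous_sinc.pow n).aestronglyMeasurable (.of_forall fun t => ?_)
  have sinc_le := Real.abs_sinc_le_one t
  have sinc_sq_le : Real.sinc t ^ 2 ≤ 1 := (sq_le_one_iff_abs_le_one _).2 sinc_le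
  calc
    ‖Real.sinc t ^ n‖ = |Real.sinc t| ^ n := by rw [norm_pow, Real.norm_eq_abs]
    _ ≤ |Real.sinc t| ^ 2 := pow_le_pow_of_le_one (abs_nonneg _) sinc_le hn
    _ = Real.sinc t ^ 2 := sq_abs _
    _ ≤ 2 * (1 + t ^ 2)⁻¹ := by
      rw [← div_eq_mul_inv, le_div_iff₀ (by positivity)]
      linarith [Real.sin_sq_le_one t, mul_sinc t ▸ mul_pow t (Real.sinc t) 2]

lemma integral_sinc_pow (n : ℕ) : ∫ t, Real.sinc t ^ n = Real.pi * sigma n := by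
  have even (t : ℝ) : Real.sinc |t| ^ n = Real.sinc t ^ n := by
    rcases abs_choice t with ht | ht <;> simp only [ht, Real.sinc_neg]
  have half_line : ∫ t in Set.Ioi (0 : ℝ), Real.sinc t ^ n =
      ∫ t in Set.Ioi (0 : ℝ), (Real.sin t / t) ^ n :=
    setIntegral_congr_fun measurableSet_Ioi fun t ht => by
      simp only [Real.sinc_of_ne_zero (Set.mem_Ioi.1 ht).ne']
  have whole_line := integral_comp_abs (f := fun t => Real.sinc t ^ n)
  simp only [even, half_line] at whole_line
  rw [whole_line, sigma]
  field_simp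

lemma sigma_eq_bspline (m : ℕ) : sigma (m + 2) = bspline (m + 1) 0 := by
  have transform : 𝓕 (fun x => (bspline (m + 1) x : ℂ)) =
      fun w => ((2 * Real.sinc (2 * Real.pi * w) ^ (m + 2) : ℝ) : ℂ) :=
    funext (fourier_ofReal_bspline (m + 1))
  have integrable_transform : Integrable (𝓕 fun x => (bspline (m + 1) x : ℂ)) := by
    rw [transform]
    exact (((integrable_sinc_pow (Nat.le_add_left 2 m)).comp_mul_left'
      Real.two_pi_pos.ne').const_mul 2).ofReal
  have inversion := congrFun (Continuous.fourierInv_fourier_eq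
    (Complex.continuous_ofReal.comp (continuous_bspline_succ m))
    ((integrable_bspline (m + 1)).ofReal (𝕜 := ℂ)) integrable_transform) 0
  rw [Function.comp_def, transform, Real.fourierInv_eq'] at inversion
  simp only [inner_zero_right, mul_zero, Complex.ofReal_zero, zero_mul, Complex.exp_zero,
    one_smul, integral_complex_ofReal, Complex.ofReal_inj] at inversion
  rw [← inversion, integral_const_mul,
    Measure.integral_comp_mul_left (fun t => Real.sinc t ^ (m + 2)), integral_sinc_pow,
    abs_of_pos (inv_pos.2 Real.two_pi_pos), smul_eq_mul]
  field_simp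

lemma sigma_pos (m : ℕ) : 0 < sigma (m + 2) := by
  rw [sigma_eq_bspline]
  exact ((isSymmDecreasing_bspline (m + 1)).nonneg 1).trans_lt
    (strictAntiOn_bspline_succ m (by simp) (by simp) one_pos)

lemma sigma_succ_lt_movingAverage_bspline (m : ℕ) {c : ℝ} (hc : |c| < 1) :
    sigma (m + 3) < movingAverage c (bspline (m + 1)) 0 := by
  rw [sigma_eq_bspline (m + 1), bspline_succ]
  exact movingAverage_one_apply_zero_lt (isSymmDecreasing_bspline (m + 1))
    (strictAntiOn_bspline_succ m) hc

lemma sigma_lt_one (m : ℕ) : sigma (m + 3) < 1 := by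
  have lt := sigma_succ_lt_movingAverage_bspline m (c := 0) (by simp)
  rw [movingAverage_zero_left] at lt
  exact lt.trans_le (bspline_apply_zero_le_one (m + 1))

/-! ### Averages over the cube -/

/-- The mean of `h (x + a ⬝ᵥ u)` over `u` in the cube `(-1, 1)ⁿ`: an iterated moving average with
radii `|a i|`. -/
noncomputable def cubeAverage {n : ℕ} (a : Fin n → ℝ) (h : ℝ → ℝ) (x : ℝ) : ℝ :=
  ∫ u, h (x + a ⬝ᵥ u) ∂Measure.pi fun _ => symmUniform

lemma cubeAverage_fin_zero (a : Fin 0 → ℝ) (h : ℝ → ℝ) : cubeAverage a h = h := by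
  ext x
  simp [cubeAverage]

section

variable {h : ℝ → ℝ}

lemma cubeAverage_eq_movingAverage (hh : IsSymmDecreasing h) {n : ℕ} (a : Fin (n + 1) → ℝ)
    (i : Fin (n + 1)) :
    cubeAverage a h = movingAverage (a i) (cubeAverage (i.removeNth a) h) := by
  ext x
  have split := measurePreserving_piFinSuccAbove (fun _ : Fin (n + 1) => symmUniform) i
  have insertNth_eq (p : ℝ × (Fin n → ℝ)) :
      (MeasurableEquiv.piFinSuccAbove (fun _ => ℝ) i).symm p =
        i.insertNth (α := fun _ => ℝ) p.1 p.2 := rfl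
  rw [cubeAverage, ← split.symm.integral_comp (MeasurableEquiv.measurableEmbedding _),
    integral_prod _ (hh.integrable_comp (by fun_prop))]
  simp only [movingAverage, cubeAverage, insertNth_eq, dotProduct, Fin.sum_univ_succAbove _ i,
    Fin.insertNth_apply_same, Fin.insertNth_apply_succAbove, Fin.removeNth, add_assoc]

lemma isSymmDecreasing_cubeAverage (hh : IsSymmDecreasing h) {n : ℕ} (a : Fin n → ℝ) :
    IsSymmDecreasing (cubeAverage a h) := by
  induction n with
  | zero => rwa [cubeAverage_fin_zero]
  | succ n ih =>
    rw [cubeAverage_eq_movingAverage hh a 0]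
    exact isSymmDecreasing_movingAverage (ih _) _

lemma cubeAverage_update_apply_zero_le (hh : IsSymmDecreasing h) {n : ℕ} (a : Fin n → ℝ)
    (i : Fin n) {c : ℝ} (hc : |a i| ≤ |c|) :
    cubeAverage (Function.update a i c) h 0 ≤ cubeAverage a h 0 := by
  cases n with
  | zero => exact i.elim0
  | succ n =>
    rw [cubeAverage_eq_movingAverage hh a i, cubeAverage_eq_movingAverage hh _ i,
      Fin.removeNth_update, Function.update_self]
    exact movingAverage_apply_zero_le (isSymmDecreasing_cubeAverage hh _) hc

lemma cubeAverage_apply_zero_le (hh : IsSymmDecreasing h) {n : ℕ} {a b : Fin n → ℝ}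
    (hab : ∀ i, |a i| ≤ |b i|) : cubeAverage b h 0 ≤ cubeAverage a h 0 := by
  suffices replace_on : ∀ s : Finset (Fin n),
      cubeAverage (s.piecewise b a) h 0 ≤ cubeAverage a h 0 by
    simpa using replace_on Finset.univ
  intro s
  induction s using Finset.induction_on with
  | empty => simp
  | insert i s hi ih =>
    rw [Finset.piecewise_insert]
    refine (cubeAverage_update_apply_zero_le hh _ i ?_).trans ih
    rw [Finset.piecewise_eq_of_notMem _ _ _ hi]
    exact hab i

lemma cubeAverage_one (hh : IsSymmDecreasing h) (n : ℕ) :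
    cubeAverage (1 : Fin n → ℝ) h = (movingAverage 1)^[n] h := by
  induction n with
  | zero => exact cubeAverage_fin_zero _ h
  | succ n ih =>
    rw [cubeAverage_eq_movingAverage hh _ 0, Function.iterate_succ_apply', ← ih]
    rfl

end

lemma iterate_movingAverage_symmIndicator {δ : ℝ} (hδ : 0 < δ) (m : ℕ) :
    (movingAverage 1)^[m + 1] (symmIndicator δ) =
      fun x => δ * movingAverage δ (bspline m) x := by
  induction m with
  | zero =>
    ext x
    simpa [bspline] using mul_movingAverage_symmIndicator_comm one_pos hδ x
  | succ m ih =>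
    rw [Function.iterate_succ_apply', ih, movingAverage_const_mul,
      movingAverage_comm (isSymmDecreasing_bspline m), ← bspline_succ]

lemma continuous_movingAverage_bspline_succ (c : ℝ) (m : ℕ) :
    Continuous (movingAverage c (bspline (m + 1))) := by
  rcases eq_or_ne c 0 with rfl | hc
  · rw [movingAverage_zero_left]
    exact continuous_bspline_succ m
  · exact continuous_movingAverage (isSymmDecreasing_bspline (m + 1)) hc

lemma mul_movingAverage_bspline_le_cubeAverage {m : ℕ} {b : Fin (m + 2) → ℝ} (hb : ∀ i, |b i| ≤ 1)
    (j : Fin (m + 2)) {δ : ℝ} (hδ : 0 < δ) :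
    δ * movingAverage (b j) (bspline m) δ ≤ cubeAverage b (symmIndicator δ) 0 := by
  have hind := isSymmDecreasing_symmIndicator δ
  have hB := isSymmDecreasing_bspline m
  calc
    δ * movingAverage (b j) (bspline m) δ
      ≤ δ * movingAverage δ (movingAverage (b j) (bspline m)) 0 := by
        gcongr
        exact apply_le_movingAverage_apply_zero (isSymmDecreasing_movingAverage hB _) δ
    _ = movingAverage (b j) ((movingAverage 1)^[m + 1] (symmIndicator δ)) 0 := by
        rw [iterate_movingAverage_symmIndicator hδ, movingAverage_const_mul, movingAverage_comm hB]
    _ = cubeAverage (Function.update 1 j (b j)) (symmIndicator δ) 0 := by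
        rw [cubeAverage_eq_movingAverage hind _ j, Fin.removeNth_update, Function.update_self,
          ← cubeAverage_one hind]
        rfl
    _ ≤ cubeAverage b (symmIndicator δ) 0 := cubeAverage_apply_zero_le hind fun i => by
        rcases eq_or_ne i j with rfl | hij
        · simp
        · simpa [hij] using hb i

lemma eventually_mul_sigma_lt_cubeAverage {m : ℕ} {b : Fin (m + 3) → ℝ} (hb : ∀ i, |b i| ≤ 1)
    {j : Fin (m + 3)} (hj : |b j| < 1) :
    ∀ᶠ δ in 𝓝[>] 0, δ * sigma (m + 3) < cubeAverage b (symmIndicator δ) 0 := by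
  have near_zero : ∀ᶠ δ in 𝓝 0, sigma (m + 3) < movingAverage (b j) (bspline (m + 1)) δ :=
    (continuous_movingAverage_bspline_succ (b j) m).continuousAt.eventually_const_lt
      (sigma_succ_lt_movingAverage_bspline m hj)
  filter_upwards [nhdsWithin_le_nhds near_zero, self_mem_nhdsWithin] with δ hlt hδ
  exact (mul_lt_mul_of_pos_left hlt hδ).trans_le
    (mul_movingAverage_bspline_le_cubeAverage hb j hδ)

/-! ### The volume of slabs of the cube -/

/-- The part of the open cube of side `N` on which the linear form with coefficients `a` is less
than `1 / 2` in absolute value, so that the values of the form at two points differ by less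
than `1`. -/
def slab {n : ℕ} (a : Fin n → ℝ) (N : ℝ) : Set (Fin n → ℝ) := {x | ‖x‖ < N / 2 ∧ |a ⬝ᵥ x| < 1 / 2}

lemma isOpen_slab {n : ℕ} (a : Fin n → ℝ) (N : ℝ) : IsOpen (slab a N) := by
  have hform : Continuous fun x => a ⬝ᵥ x := continuous_const.dotProduct continuous_id
  exact (isOpen_lt continuous_norm continuous_const).inter
    (isOpen_lt hform.abs continuous_const)

lemma convex_slab {n : ℕ} (a : Fin n → ℝ) (N : ℝ) : Convex ℝ (slab a N) := by
  have slab_eq : slab a N = Metric.ball 0 (N / 2) ∩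
      dotProductEquiv ℝ (Fin n) a ⁻¹' Metric.ball 0 (1 / 2) := by
    ext x
    simp [slab]
  rw [slab_eq]
  exact (convex_ball _ _).inter ((convex_ball _ _).linear_preimage _)

lemma pi_symmUniform (ι : Type*) [Fintype ι] : Measure.pi (fun _ : ι => symmUniform) =
    ((2 : ENNReal)⁻¹ ^ Fintype.card ι) • volume.restrict (Metric.ball 0 1) := by
  refine Measure.pi_eq fun s _ => ?_
  rw [ball_pi _ one_pos, Measure.smul_apply, volume_pi, Measure.restrict_pi_pi, Measure.pi_pi]
  simp [symmUniform_eq, Finset.prod_mul_distrib, Real.ball_eq_Ioo, restrict_Ioo_eq_restrict_Ioc]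

lemma cubeAverage_symmIndicator_apply_zero {n : ℕ} (a : Fin n → ℝ) (δ : ℝ) :
    cubeAverage a (symmIndicator δ) 0 =
      2⁻¹ ^ n * volume.real (Metric.ball 0 1 ∩ {u | |a ⬝ᵥ u| < δ}) := by
  have hform : Continuous fun u => a ⬝ᵥ u := continuous_const.dotProduct continuous_id
  have hs : MeasurableSet {u | |a ⬝ᵥ u| < δ} :=
    (isOpen_lt hform.abs continuous_const).measurableSet
  have integrand (u : Fin n → ℝ) :
      symmIndicator δ (0 + a ⬝ᵥ u) = {u | |a ⬝ᵥ u| < δ}.indicator 1 u := by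
    simp [symmIndicator_apply, Set.indicator_apply]
  simp_rw [cubeAverage, integrand]
  rw [integral_indicator_one hs, pi_symmUniform, measureReal_ennreal_smul_apply,
    measureReal_restrict_apply hs, Set.inter_comm]
  simp

open scoped Pointwise in
lemma slab_eq_smul {n : ℕ} (a : Fin n → ℝ) {N : ℝ} (hN : 0 < N) :
    slab a N = (N / 2) • (Metric.ball 0 1 ∩ {u | |a ⬝ᵥ u| < N⁻¹}) := by
  ext x
  have half_pos : 0 < N / 2 := half_pos hN
  rw [Set.mem_smul_set_iff_inv_smul_mem₀ half_pos.ne']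
  have norm_iff : ‖(N / 2)⁻¹ • x‖ < 1 ↔ ‖x‖ < N / 2 := by
    rw [norm_smul, norm_inv, Real.norm_of_nonneg half_pos.le, inv_mul_lt_one₀ half_pos]
  have form_iff : |a ⬝ᵥ ((N / 2)⁻¹ • x)| < N⁻¹ ↔ |a ⬝ᵥ x| < 1 / 2 := by
    rw [dotProduct_smul, smul_eq_mul, abs_mul, abs_inv, abs_of_pos half_pos,
      inv_mul_lt_iff₀ half_pos, div_mul_eq_mul_div, mul_inv_cancel₀ hN.ne']
  rw [Set.mem_inter_iff, mem_ball_zero_iff, Set.mem_ofPred_eq, norm_iff, form_iff]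
  rfl

lemma volume_real_slab {n : ℕ} (a : Fin n → ℝ) {N : ℝ} (hN : 0 < N) :
    volume.real (slab a N) = N ^ n * cubeAverage a (symmIndicator N⁻¹) 0 := by
  rw [slab_eq_smul a hN, cubeAverage_symmIndicator_apply_zero, measureReal_def,
    Measure.addHaar_smul, ENNReal.toReal_mul, ENNReal.toReal_ofReal (abs_nonneg _),
    Module.finrank_fin_fun, abs_of_nonneg (by positivity), div_eq_mul_inv, mul_pow, mul_assoc,
    measureReal_def]

lemma cubeAverage_smul_symmIndicator_mul {n : ℕ} {c : ℝ} (hc : 0 < c) (a : Fin n → ℝ) (δ : ℝ) :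
    cubeAverage (c • a) (symmIndicator (c * δ)) 0 = cubeAverage a (symmIndicator δ) 0 := by
  have integrand (u : Fin n → ℝ) :
      symmIndicator (c * δ) (0 + (c • a) ⬝ᵥ u) = symmIndicator δ (0 + a ⬝ᵥ u) := by
    simp [symmIndicator_apply, abs_mul, abs_of_pos hc, hc]
  simp only [cubeAverage, integrand]

lemma eventually_lt_volume_slab {m : ℕ} {a : Fin (m + 3) → ℝ} {j : Fin (m + 3)} (hj : |a j| < ‖a‖) :
    ∀ᶠ N in Filter.atTop, N ^ (m + 2) * (sigma (m + 3) / ‖a‖) < volume.real (slab a N) := by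
  have norm_pos : 0 < ‖a‖ := (abs_nonneg _).trans_lt hj
  have small : Filter.Tendsto (fun N : ℝ => ‖a‖⁻¹ * N⁻¹) Filter.atTop (𝓝[>] 0) := by
    refine tendsto_nhdsWithin_iff.2 ⟨by simpa using tendsto_inv_atTop_zero.const_mul ‖a‖⁻¹, ?_⟩
    filter_upwards [Filter.eventually_gt_atTop 0] with N hN
    exact mul_pos (inv_pos.2 norm_pos) (inv_pos.2 hN)
  have abs_eq (i : Fin (m + 3)) : |(‖a‖⁻¹ • a) i| = ‖a‖⁻¹ * |a i| := by
    rw [Pi.smul_apply, smul_eq_mul, abs_mul, abs_of_pos (inv_pos.2 norm_pos)]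
  have normalised := small.eventually <| eventually_mul_sigma_lt_cubeAverage (b := ‖a‖⁻¹ • a)
    (fun i => by rw [abs_eq, inv_mul_le_one₀ norm_pos]; exact norm_le_pi_norm a i)
    (by rwa [abs_eq j, inv_mul_lt_one₀ norm_pos])
  filter_upwards [normalised, Filter.eventually_gt_atTop 0] with N hlt hN
  rw [cubeAverage_smul_symmIndicator_mul (inv_pos.2 norm_pos)] at hlt
  calc
    N ^ (m + 2) * (sigma (m + 3) / ‖a‖) = N ^ (m + 3) * (‖a‖⁻¹ * N⁻¹ * sigma (m + 3)) := by
      rw [pow_succ N (m + 2)]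
      field_simp
    _ < N ^ (m + 3) * cubeAverage a (symmIndicator N⁻¹) 0 := by gcongr
    _ = volume.real (slab a N) := (volume_real_slab a hN).symm

/-! ### Squeezing a convex body along a subspace -/

lemma measurePreserving_add_fiber_const {E ι : Type*} [AddGroup E] [MeasurableSpace E]
    [MeasurableAdd₂ E] (μ : Measure E) [μ.IsAddRightInvariant] [Countable ι] [MeasurableSpace ι]
    [MeasurableSingletonClass ι] {f : E → ι} (hf : Measurable f) (v : ι → E)
    (hfv : ∀ x i, f (x + v i) = f x) : MeasurePreserving (fun x => x + v (f x)) μ μ := by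
  have hmeas : Measurable fun x => x + v (f x) :=
    measurable_id.add ((measurable_of_countable v).comp hf)
  have sum_fibers {s : Set E} (hs : MeasurableSet s) : μ s = ∑' i, μ (s ∩ f ⁻¹' {i}) := by
    have disjoint : Pairwise (Function.onFun Disjoint fun i => s ∩ f ⁻¹' {i}) := fun i j hij =>
      (Disjoint.preimage f (Set.disjoint_singleton.2 hij)).mono Set.inter_subset_right
        Set.inter_subset_right
    rw [← measure_iUnion disjoint fun i => hs.inter (hf (measurableSet_singleton i)),
      ← Set.inter_iUnion, ← Set.preimage_iUnion, Set.iUnion_of_singleton, Set.preimage_univ,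
      Set.inter_univ]
  have on_fiber (s : Set E) (i : ι) : (fun x => x + v (f x)) ⁻¹' s ∩ f ⁻¹' {i} =
      (fun x => x + v i) ⁻¹' (s ∩ f ⁻¹' {i}) := by
    ext x
    simp only [Set.mem_inter_iff, Set.mem_preimage, Set.mem_singleton_iff, hfv]
    exact and_congr_left fun hx => by rw [hx]
  refine ⟨hmeas, Measure.ext fun s hs => ?_⟩
  rw [Measure.map_apply hmeas hs, sum_fibers (hmeas hs), sum_fibers hs]
  simp_rw [on_fiber, measure_preimage_add_right]

lemma exists_measurable_index_add_mem {E : Type*} [AddGroup E] [TopologicalSpace E]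
    [ContinuousAdd E] [SecondCountableTopology E] [MeasurableSpace E] [BorelSpace E]
    {K : Set E} (hK : IsOpen K) (V : Set E) [Nonempty V] :
    ∃ (v : ℕ → V) (f : E → ℕ), Measurable f ∧ ∀ w, ∀ u ∈ V, u + w ∈ K → v (f w) + w ∈ K := by
  classical
  let v := TopologicalSpace.denseSeq V
  have hfind (w : E) : ∃ i, (v i : E) + w ∈ K ∨ ∀ j, (v j : E) + w ∉ K := by
    by_contra! h
    obtain ⟨j, hj⟩ := (h 0).2
    exact (h j).1 hj
  have hmeas (i : ℕ) : MeasurableSet {w | (v i : E) + w ∈ K} :=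
    (hK.preimage (continuous_const_add _)).measurableSet
  have hmeas_none : MeasurableSet {w | ∀ j, (v j : E) + w ∉ K} := by
    rw [Set.ofPred_forall]
    exact .iInter fun j => (hmeas j).compl
  refine ⟨v, fun w => Nat.find (hfind w),
    measurable_find hfind fun i => (hmeas i).union hmeas_none, fun w u hu huw => ?_⟩
  obtain ⟨j, hj⟩ := (TopologicalSpace.denseRange_denseSeq V).exists_mem_open
    (hK.preimage (continuous_subtype_val.add continuous_const)) ⟨⟨u, hu⟩, huw⟩
  exact (Nat.find_spec (hfind w)).resolve_right fun h => h j hj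

lemma det_smul_id_add_smul_projection {E : Type*} [AddCommGroup E] [Module ℝ E]
    [FiniteDimensional ℝ E] {V W : Submodule ℝ E} (hWV : IsCompl W V) (θ : ℝ) :
    LinearMap.det (θ • LinearMap.id + (1 - θ) • W.projection V hWV) = θ ^ Module.finrank ℝ V := by
  let e := W.prodEquivOfIsCompl V hWV
  have conj : (e.symm : E →ₗ[ℝ] W × V) ∘ₗ (θ • LinearMap.id + (1 - θ) • W.projection V hWV) ∘ₗ
      (e : W × V →ₗ[ℝ] E) = LinearMap.id.prodMap (θ • LinearMap.id) := by
    ext <;> simp [e, ← add_smul]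
  have hdet := LinearMap.det_conj (θ • LinearMap.id + (1 - θ) • W.projection V hWV) e.symm
  rw [← hdet, e.symm_symm, conj, LinearMap.det_prodMap]
  simp

section Squeeze

variable {E : Type*} [NormedAddCommGroup E] [NormedSpace ℝ E] [FiniteDimensional ℝ E]
  [MeasurableSpace E] [BorelSpace E] (μ : Measure E) [μ.IsAddHaarMeasure]

lemma measure_image_fiberwise_homothety {V W : Submodule ℝ E} (hWV : IsCompl W V) {f : E → ℕ}
    (hf : Measurable f) {v : ℕ → V} {c : E → E}
    (hc : ∀ x, c x = v (f (W.projection V hWV x)) + W.projection V hWV x)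
    {θ : ℝ} (hθ : 0 < θ) {A : Set E} (hA : MeasurableSet A) :
    MeasurableSet ((fun x => θ • x + (1 - θ) • c x) '' A) ∧
      μ ((fun x => θ • x + (1 - θ) • c x) '' A) =
        ENNReal.ofReal (θ ^ Module.finrank ℝ V) * μ A := by
  let P := W.projection V hWV
  have P_v (i : ℕ) : P (v i) = 0 := W.projection_apply_right hWV (v i)
  let L := θ • LinearMap.id + (1 - θ) • P
  let T (x : E) := x + (1 - θ) • (v (f (P x)) : E)
  have L_apply (x : E) : L x = θ • x + (1 - θ) • P x := rfl
  have det_L : LinearMap.det L = θ ^ Module.finrank ℝ V := det_smul_id_add_smul_projection hWV θ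
  have hLA : MeasurableSet (L '' A) :=
    hA.image_of_continuousOn_injOn L.continuous_of_finiteDimensional.continuousOn
      (LinearMap.equivOfDetNeZero L (det_L ▸ by positivity)).injective.injOn
  have T_preserving : MeasurePreserving T μ μ :=
    measurePreserving_add_fiber_const μ (hf.comp P.continuous_of_finiteDimensional.measurable)
      (fun i => (1 - θ) • (v i : E)) fun x i => by simp [P_v]
  have T_injective : Function.Injective T := fun x y hxy => by
    have hP : P x = P y := by simpa [T, P_v] using congrArg P hxy
    simpa only [T, hP, add_left_inj] using hxy
  have T_emb : MeasurableEmbedding T := T_preserving.measurable.measurableEmbedding T_injective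
  have image_eq : (fun x => θ • x + (1 - θ) • c x) '' A = T '' (L '' A) := by
    have P_L (x : E) : P (L x) = P x := by
      have P_P : P (P x) = P x :=
        W.projection_apply_of_mem_left hWV (W.projection_apply_mem hWV x)
      rw [L_apply, map_add, map_smul, map_smul, P_P]
      module
    rw [Set.image_image]
    refine Set.image_congr fun x _ => ?_
    change _ = L x + (1 - θ) • (v (f (P (L x))) : E)
    rw [P_L, L_apply, hc]
    module
  rw [image_eq, ← T_preserving.measure_preimage_emb T_emb, T_injective.preimage_image,
    Measure.addHaar_image_linearMap, det_L, abs_of_pos (by positivity)]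
  exact ⟨T_emb.measurableSet_image' hLA, rfl⟩

lemma exists_fiberwise_center (V : Submodule ℝ E) {K : Set E} (hK : IsOpen K) {θ : ℝ}
    (hθ : 0 < θ) : ∃ c : E → E, Set.MapsTo c K K ∧ (∀ x, c x - x ∈ V) ∧
      (∀ x y, x - y ∈ V → c x = c y) ∧ ∀ A, MeasurableSet A →
        MeasurableSet ((fun x => θ • x + (1 - θ) • c x) '' A) ∧
        μ ((fun x => θ • x + (1 - θ) • c x) '' A) =
          ENNReal.ofReal (θ ^ Module.finrank ℝ V) * μ A := by
  obtain ⟨W, hVW⟩ := V.exists_isCompl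
  let P := W.projection V hVW.symm
  have P_eq_zero {x : E} : P x = 0 ↔ x ∈ V := W.projection_apply_eq_zero_iff hVW.symm
  have sub_P_mem (x : E) : x - P x ∈ V := by
    rw [← P_eq_zero, map_sub,
      W.projection_apply_of_mem_left hVW.symm (W.projection_apply_mem hVW.symm x), sub_self]
  obtain ⟨v, f, hf, hvf⟩ := exists_measurable_index_add_mem hK (V : Set E)
  refine ⟨fun x => v (f (P x)) + P x, fun x hx => ?_, fun x => ?_, fun x y hxy => ?_,
    fun A hA => measure_image_fiberwise_homothety μ hVW.symm hf (fun _ => rfl) hθ hA⟩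
  · exact hvf (P x) (x - P x) (sub_P_mem x) (by simpa using hx)
  · simpa only [← sub_sub_eq_add_sub] using V.sub_mem (v (f (P x))).2 (sub_P_mem x)
  · have hP : P x = P y := by rw [← sub_eq_zero, ← map_sub, P_eq_zero.2 hxy]
    simp only [hP]

lemma exists_squeeze (V : Submodule ℝ E) {K A : Set E} (hKo : IsOpen K) (hKc : Convex ℝ K)
    (hA : MeasurableSet A) (hAK : A ⊆ K) {θ : ℝ} (hθ : 0 < θ) (hθ' : θ ≤ 1) :
    ∃ A' ⊆ K, MeasurableSet A' ∧ μ A' = ENNReal.ofReal (θ ^ Module.finrank ℝ V) * μ A ∧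
      ∀ x ∈ A', ∀ y ∈ A', x - y ∈ V → ∃ x' ∈ A, ∃ y' ∈ A, x - y = θ • (x' - y') := by
  obtain ⟨c, hcK, hcV, hc, hcA⟩ := exists_fiberwise_center μ V hKo hθ
  refine ⟨(fun x => θ • x + (1 - θ) • c x) '' A, ?_, (hcA A hA).1, (hcA A hA).2, ?_⟩
  · rintro _ ⟨x, hx, rfl⟩
    exact hKc (hAK hx) (hcK (hAK hx)) hθ.le (sub_nonneg.2 hθ') (by ring)
  · rintro _ ⟨x, hx, rfl⟩ _ ⟨y, hy, rfl⟩ hxy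
    have hxyV : x - y ∈ V := by
      have hsub : x - y = (θ • x + (1 - θ) • c x - (θ • y + (1 - θ) • c y)) -
          (1 - θ) • (c x - x) + (1 - θ) • (c y - y) := by module
      rw [hsub]
      exact V.add_mem (V.sub_mem hxy (V.smul_mem _ (hcV x))) (V.smul_mem _ (hcV y))
    refine ⟨x, hx, y, hy, ?_⟩
    dsimp only
    rw [hc x y hxyV]
    module

end Squeeze

/-! ### Successive minima -/

section IteratedSqueeze

variable {E : Type*} [NormedAddCommGroup E] [NormedSpace ℝ E] [FiniteDimensional ℝ E]
  [MeasurableSpace E] [BorelSpace E] (μ : Measure E) [μ.IsAddHaarMeasure]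
  {V : ℕ → Submodule ℝ E} {r : ℕ → ℝ} {K : Set E}

lemma exists_iterated_squeeze (hV : Monotone V) (hr : Monotone r) (hr₀ : ∀ i, 0 < r i)
    (hKo : IsOpen K) (hKc : Convex ℝ K) (k : ℕ) (hVk : ∀ i ≤ k, Module.finrank ℝ (V i) = i) :
    ∃ A ⊆ K, MeasurableSet A ∧
      μ A = ENNReal.ofReal ((∏ i ∈ Finset.range k, r i) / r k ^ k) * μ K ∧
      ∀ x ∈ A, ∀ y ∈ A, ∀ i < k, x - y ∈ V (i + 1) →
        ∃ x' ∈ K, ∃ y' ∈ K, x - y = (r i / r k) • (x' - y') := by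
  induction k with
  | zero => exact ⟨K, subset_rfl, hKo.measurableSet, by simp, by simp⟩
  | succ k ih =>
    obtain ⟨A, hAK, hAmeas, hμA, hAsub⟩ := ih fun i hi => hVk i (hi.trans k.le_succ)
    have hrk := hr₀ k
    have hrk' := hr₀ (k + 1)
    obtain ⟨A', hA'K, hA'meas, hμA', hA'sub⟩ :=
      exists_squeeze μ (V (k + 1)) hKo hKc hAmeas hAK (θ := r k / r (k + 1))
        (by positivity) ((div_le_one hrk').2 (hr k.le_succ))
    refine ⟨A', hA'K, hA'meas, ?_, fun x hx y hy i hi hxy => ?_⟩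
    · rw [hμA', hμA, hVk (k + 1) le_rfl, ← mul_assoc, ← ENNReal.ofReal_mul (by positivity),
        Finset.prod_range_succ]
      congr 2
      rw [div_pow]
      field_simp
      ring
    · obtain ⟨x', hx', y', hy', hsub⟩ := hA'sub x hx y hy (hV (by lia) hxy)
      rcases (Nat.lt_succ_iff.1 hi).lt_or_eq with hik | rfl
      · have hxy' : x' - y' ∈ V (i + 1) := by
          rwa [hsub, (V (i + 1)).smul_mem_iff (by positivity)] at hxy
        obtain ⟨x'', hx'', y'', hy'', hsub'⟩ := hAsub x' hx' y' hy' i hik hxy'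
        refine ⟨x'', hx'', y'', hy'', ?_⟩
        rw [hsub, hsub', smul_smul, mul_comm, div_mul_div_cancel₀ hrk.ne']
      · exact ⟨x', hAK hx', y', hAK hy', hsub⟩

lemma prod_mul_measure_le_of_isAddFundamentalDomain (hV : Monotone V) (hr : Monotone r)
    (hr₀ : ∀ i, 0 < r i) (hKo : IsOpen K) (hKc : Convex ℝ K) {k : ℕ}
    (hVk : ∀ i ≤ k, Module.finrank ℝ (V i) = i) {Λ : AddSubgroup E} [Countable Λ] {F : Set E}
    (hF : IsAddFundamentalDomain Λ F μ) (hΛK : ∀ x ∈ K, ∀ y ∈ K, x - y ∈ Λ → x - y ∈ V k)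
    (hΛV : ∀ i < k, ∀ w ∈ Λ, w ∈ V (i + 1) → ‖w‖ < r i → w ∈ V i)
    (hKr : ∀ x ∈ K, ∀ y ∈ K, ‖x - y‖ < r k) :
    ENNReal.ofReal ((∏ i ∈ Finset.range k, r i) / r k ^ k) * μ K ≤ μ F := by
  obtain ⟨A, hAK, hAmeas, hμA, hAsub⟩ := exists_iterated_squeeze μ hV hr hr₀ hKo hKc k hVk
  rw [← hμA]
  by_contra! hlt
  obtain ⟨u, v, huv, hdisj⟩ :=
    exists_pair_mem_lattice_not_disjoint_vadd hF hAmeas.nullMeasurableSet hlt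
  obtain ⟨_, ⟨x, hx, rfl⟩, ⟨y, hy, hyx⟩⟩ := Set.not_disjoint_iff.1 hdisj
  have hxy : x - y = v - u := by
    rw [sub_eq_sub_iff_add_eq_add, add_comm x, add_comm (v : E) y, add_comm y]
    exact hyx.symm
  have hmem : x - y ∈ Λ := hxy ▸ Λ.sub_mem v.2 u.2
  have descend (i : ℕ) (hi : i < k) (hxyi : x - y ∈ V (i + 1)) : x - y ∈ V i := by
    refine hΛV i hi _ hmem hxyi ?_
    obtain ⟨x', hx', y', hy', hsub⟩ := hAsub x hx y hy i hi hxyi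
    have hri := hr₀ i
    have hrk := hr₀ k
    calc ‖x - y‖ = r i / r k * ‖x' - y'‖ := by
          rw [hsub, norm_smul, Real.norm_of_nonneg (by positivity)]
      _ < r i / r k * r k := by gcongr; exact hKr x' hx' y' hy'
      _ = r i := div_mul_cancel₀ _ hrk.ne'
  have hzero : x - y ∈ V 0 :=
    Nat.decreasingInduction (motive := fun i _ => x - y ∈ V i) descend
      (hΛK x (hAK hx) y (hAK hy) hmem) k.zero_le
  rw [Submodule.finrank_eq_zero.1 (hVk 0 k.zero_le), Submodule.mem_bot, hxy, sub_eq_zero] at hzero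
  exact huv (Subtype.ext hzero.symm)

end IteratedSqueeze

lemma exists_forall_norm_le_of_finite_inter_closedBall {E : Type*} [SeminormedAddGroup E]
    {T : Set E} (hT : ∀ R : ℝ, (T ∩ Metric.closedBall 0 R).Finite) (hne : T.Nonempty) :
    ∃ z ∈ T, ∀ w ∈ T, ‖z‖ ≤ ‖w‖ := by
  obtain ⟨w₀, hw₀⟩ := hne
  obtain ⟨z, ⟨hzT, hzw₀⟩, hz⟩ := Set.exists_min_image _ (‖·‖) (hT ‖w₀‖) ⟨w₀, hw₀, by simp⟩
  refine ⟨z, hzT, fun w hw => ?_⟩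
  rcases le_total ‖w‖ ‖w₀‖ with hle | hle
  · exact hz w ⟨hw, mem_closedBall_zero_iff.2 hle⟩
  · exact (mem_closedBall_zero_iff.1 hzw₀).trans hle

/-- Linearly independent vectors `x 0, …, x (k - 1)` of `T` that realise its first `k` successive
minima, encoded through minimality: any vector of `T` shorter than `x i` already lies in the span of
the previous ones. -/
structure IsSuccessiveMinima {E : Type*} [NormedAddCommGroup E] [NormedSpace ℝ E] (T : Set E)
    {k : ℕ} (x : Fin k → E) : Prop where
  mem : ∀ i, x i ∈ T
  linearIndependent : LinearIndependent ℝ x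
  mem_span_of_norm_lt : ∀ i, ∀ w ∈ T, ‖w‖ < ‖x i‖ → w ∈ Submodule.span ℝ (x '' Set.Iio i)

section SuccessiveMinima

variable {E : Type*} [NormedAddCommGroup E] [NormedSpace ℝ E] {T : Set E}

lemma IsSuccessiveMinima.snoc {k : ℕ} {x : Fin k → E} (hx : IsSuccessiveMinima T x) {z : E}
    (hzT : z ∈ T) (hz : z ∉ Submodule.span ℝ (Set.range x))
    (hzmin : ∀ w ∈ T, w ∉ Submodule.span ℝ (Set.range x) → ‖z‖ ≤ ‖w‖) :
    IsSuccessiveMinima T (Fin.snoc x z : Fin (k + 1) → E) := by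
  have image_snoc (s : Set (Fin k)) :
      (Fin.snoc x z : Fin (k + 1) → E) '' (Fin.castSucc '' s) = x '' s := by
    simp only [Set.image_image, Fin.snoc_castSucc]
  refine ⟨fun i => ?_, linearIndependent_finSnoc.2 ⟨hx.linearIndependent, hz⟩,
    fun i w hwT hw => ?_⟩
  · induction i using Fin.lastCases with
    | last => simpa only [Fin.snoc_last] using hzT
    | cast i => simpa only [Fin.snoc_castSucc] using hx.mem i
  · induction i using Fin.lastCases with
    | last =>
      have Iio_last : Set.Iio (Fin.last k) = Fin.castSucc '' Set.univ := by
        ext j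
        rw [Set.image_univ, Set.mem_range, Fin.exists_castSucc_eq, Set.mem_Iio,
          Fin.lt_last_iff_ne_last]
      rw [Fin.snoc_last] at hw
      rw [Iio_last, image_snoc, Set.image_univ]
      exact by_contra fun hmem => (hzmin w hwT hmem).not_gt hw
    | cast i =>
      rw [Fin.snoc_castSucc] at hw
      rw [← Fin.image_castSucc_Iio, image_snoc]
      exact hx.mem_span_of_norm_lt i w hwT hw

lemma exists_isSuccessiveMinima (hT : ∀ R : ℝ, (T ∩ Metric.closedBall 0 R).Finite) (k : ℕ)
    (hk : k ≤ Module.finrank ℝ (Submodule.span ℝ T)) :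
    ∃ x : Fin k → E, IsSuccessiveMinima T x := by
  induction k with
  | zero => exact ⟨![], fun i => i.elim0, linearIndependent_empty_type, fun i => i.elim0⟩
  | succ k ih =>
    obtain ⟨x, hx⟩ := ih (k.le_succ.trans hk)
    have hne : (T \ Submodule.span ℝ (Set.range x)).Nonempty := by
      by_contra h
      have := FiniteDimensional.span_of_finite ℝ (Set.finite_range x)
      have hle := Submodule.finrank_mono (Submodule.span_le.2
        (Set.sdiff_eq_empty.1 (Set.not_nonempty_iff_eq_empty.1 h)))
      rw [finrank_span_eq_card hx.linearIndependent, Fintype.card_fin] at hle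
      lia
    obtain ⟨z, ⟨hzT, hz⟩, hzmin⟩ := exists_forall_norm_le_of_finite_inter_closedBall
      (fun R => (hT R).subset (Set.inter_subset_inter_left _ Set.sdiff_subset)) hne
    exact ⟨Fin.snoc x z, hx.snoc hzT hz fun w hwT hw => hzmin w ⟨hwT, hw⟩⟩

lemma IsSuccessiveMinima.monotone_norm {k : ℕ} {x : Fin k → E} (hx : IsSuccessiveMinima T x) :
    Monotone fun i => ‖x i‖ := by
  intro i j hij
  by_contra! hlt
  exact hx.linearIndependent.notMem_span_image (s := Set.Iio i) hij.not_gt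
    (hx.mem_span_of_norm_lt i (x j) (hx.mem j) hlt)

end SuccessiveMinima

lemma finrank_span_image_val_lt {R M : Type*} [Ring R] [Nontrivial R]
    [StrongRankCondition R] [AddCommGroup M] [Module R M] {k : ℕ} {x : Fin k → M}
    (hx : LinearIndependent R x) {i : ℕ} (hi : i ≤ k) :
    Module.finrank R (Submodule.span R (x '' {j | (j : ℕ) < i})) = i := by
  have image_eq : x '' {j | (j : ℕ) < i} = Set.range (x ∘ Fin.castLE hi) := by
    rw [Set.range_comp, Fin.range_castLE]
  rw [image_eq, finrank_span_eq_card (hx.comp _ (Fin.castLE_injective hi)), Fintype.card_fin]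

lemma IsSuccessiveMinima.prod_norm_mul_measure_le {E : Type*} [NormedAddCommGroup E]
    [NormedSpace ℝ E] [FiniteDimensional ℝ E] [MeasurableSpace E] [BorelSpace E] (μ : Measure E)
    [μ.IsAddHaarMeasure] {Λ : AddSubgroup E} [Countable Λ] {F : Set E}
    (hF : IsAddFundamentalDomain Λ F μ) {H : Submodule ℝ E} {k : ℕ}
    (hH : Module.finrank ℝ H = k) {x : Fin k → E} (hx : IsSuccessiveMinima (Λ ∩ H : Set E) x)
    {K : Set E} (hKo : IsOpen K) (hKc : Convex ℝ K)
    (hΛK : ∀ u ∈ K, ∀ v ∈ K, u - v ∈ Λ → u - v ∈ H) {N : ℝ} (hN : 0 < N) (hxN : ∀ i, ‖x i‖ ≤ N)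
    (hKN : ∀ u ∈ K, ∀ v ∈ K, ‖u - v‖ < N) :
    ENNReal.ofReal ((∏ i, ‖x i‖) / N ^ k) * μ K ≤ μ F := by
  let V (i : ℕ) : Submodule ℝ E := Submodule.span ℝ (x '' {j | (j : ℕ) < i})
  let r (i : ℕ) : ℝ := if hi : i < k then ‖x ⟨i, hi⟩‖ else N
  have r_of_lt {i : ℕ} (hi : i < k) : r i = ‖x ⟨i, hi⟩‖ := dif_pos hi
  have r_of_le {i : ℕ} (hi : k ≤ i) : r i = N := dif_neg hi.not_gt
  have hV : Monotone V := fun i j hij =>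
    Submodule.span_mono (Set.image_mono fun l hl => hl.trans_le hij)
  have hVk (i : ℕ) (hi : i ≤ k) : Module.finrank ℝ (V i) = i :=
    finrank_span_image_val_lt hx.linearIndependent hi
  have V_le (i : ℕ) : V i ≤ H :=
    Submodule.span_le.2 (Set.image_subset_iff.2 fun j _ => (hx.mem j).2)
  have V_k : V k = H := Submodule.eq_of_le_of_finrank_eq (V_le k) (by rw [hVk k le_rfl, hH])
  have r_pos (i : ℕ) : 0 < r i := by
    rcases lt_or_ge i k with hi | hi
    · exact r_of_lt hi ▸ norm_pos_iff.2 (hx.linearIndependent.ne_zero _)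
    · exact r_of_le hi ▸ hN
  have r_mono : Monotone r := fun i j hij => by
    rcases lt_or_ge j k with hj | hj
    · rw [r_of_lt (hij.trans_lt hj), r_of_lt hj]
      exact hx.monotone_norm hij
    · rcases lt_or_ge i k with hi | hi
      · exact r_of_lt hi ▸ r_of_le hj ▸ hxN _
      · rw [r_of_le hi, r_of_le hj]
  have prod_r : ∏ i ∈ Finset.range k, r i = ∏ i, ‖x i‖ := by
    rw [Finset.prod_range]
    exact Finset.prod_congr rfl fun i _ => r_of_lt i.2
  have hΛV (i : ℕ) (hi : i < k) (w : E) (hw : w ∈ Λ) (hwV : w ∈ V (i + 1)) (hwr : ‖w‖ < r i) :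
      w ∈ V i :=
    hx.mem_span_of_norm_lt ⟨i, hi⟩ w ⟨hw, V_le _ hwV⟩ (r_of_lt hi ▸ hwr)
  simpa only [prod_r, r_of_le le_rfl] using
    prod_mul_measure_le_of_isAddFundamentalDomain μ hV r_mono r_pos hKo hKc hVk hF
      (V_k.symm ▸ hΛK) hΛV (by rwa [r_of_le le_rfl])

/-! ### Integer solutions of one linear equation -/

lemma mem_span_int_basisFun {ι : Type*} [Finite ι] {w : ι → ℝ} :
    w ∈ Submodule.span ℤ (Set.range (Pi.basisFun ℝ ι)) ↔
      ∃ z : ι → ℤ, (fun j => (z j : ℝ)) = w := by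
  simp only [Module.Basis.mem_span_iff_repr_mem, Pi.basisFun_repr, algebraMap_int_eq,
    Int.coe_castRingHom, Set.mem_range, funext_iff]
  exact Classical.skolem

lemma linearIndependent_int_of_real {ι κ : Type*} {x : κ → ι → ℤ}
    (hx : LinearIndependent ℝ fun i j => (x i j : ℝ)) : LinearIndependent ℤ x :=
  LinearIndependent.of_comp ((Int.castAddHom ℝ).compLeft ι).toIntLinearMap
    (hx.restrict_scalars (smul_left_injective ℤ one_ne_zero))

/-- The integer solutions of `a ⬝ᵥ x = 0`, as a subset of `ℝⁿ`. -/
def integerKernel {n : ℕ} (a : Fin n → ℤ) : Set (Fin n → ℝ) :=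
  (Submodule.span ℤ (Set.range (Pi.basisFun ℝ (Fin n)))).toAddSubgroup ∩
    (dotProductEquiv ℝ (Fin n) fun j => (a j : ℝ)).ker

section IntegerKernel

variable {n : ℕ} {a : Fin n → ℤ}

lemma dotProduct_intCast (z : Fin n → ℤ) :
    (fun j => (a j : ℝ)) ⬝ᵥ (fun j => (z j : ℝ)) = ((a ⬝ᵥ z : ℤ) : ℝ) := by
  simp [dotProduct]

lemma mem_integerKernel_iff {w : Fin n → ℝ} :
    w ∈ integerKernel a ↔ ∃ z : Fin n → ℤ, a ⬝ᵥ z = 0 ∧ (fun j => (z j : ℝ)) = w := by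
  simp only [integerKernel, Submodule.coe_toAddSubgroup, Set.mem_inter_iff, SetLike.mem_coe,
    mem_span_int_basisFun, LinearMap.mem_ker, dotProductEquiv_apply_apply]
  constructor
  · rintro ⟨⟨z, rfl⟩, hz⟩
    exact ⟨z, by exact_mod_cast (dotProduct_intCast z).symm.trans hz, rfl⟩
  · rintro ⟨z, hz, rfl⟩
    exact ⟨⟨z, rfl⟩, by rw [dotProduct_intCast, hz, Int.cast_zero]⟩

lemma finite_integerKernel_inter_closedBall (a : Fin n → ℤ) (R : ℝ) :
    (integerKernel a ∩ Metric.closedBall 0 R).Finite :=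
  (ZSpan.setFinite_inter (Pi.basisFun ℝ (Fin n)) Metric.isBounded_closedBall).subset
    fun _ hw => ⟨hw.2, hw.1.1⟩

lemma finrank_ker_dotProduct_add_one (ha : a ≠ 0) :
    Module.finrank ℝ (dotProductEquiv ℝ (Fin n) fun j => (a j : ℝ)).ker + 1 = n := by
  have hne : dotProductEquiv ℝ (Fin n) (fun j => (a j : ℝ)) ≠ 0 := by
    rw [Ne, LinearEquiv.map_eq_zero_iff]
    exact fun h => ha (funext fun j => Int.cast_eq_zero.1 (congrFun h j))
  simpa using Module.Dual.finrank_ker_add_one_of_ne_zero hne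

lemma ker_dotProduct_le_span_integerKernel (ha : a ≠ 0) :
    (dotProductEquiv ℝ (Fin n) fun j => (a j : ℝ)).ker ≤
      Submodule.span ℝ (integerKernel a) := by
  obtain ⟨l, hl⟩ := Function.ne_iff.1 ha
  intro v hv
  have hl' : (a l : ℝ) ≠ 0 := by exact_mod_cast hl
  have hv₀ : ∑ i, (a i : ℝ) * v i = 0 := hv
  let z (i : Fin n) : Fin n → ℤ := Pi.single i (a l) - Pi.single l (a i)
  have hz (i : Fin n) : a ⬝ᵥ z i = 0 := by
    rw [dotProduct_sub, dotProduct_single, dotProduct_single, mul_comm, sub_self]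
  have v_eq : v = ∑ i, (v i / a l) • (fun j => (z i j : ℝ)) := by
    ext j
    have smul_apply (i : Fin n) : ((v i / a l) • fun j => (z i j : ℝ)) j =
        (if j = i then v i else 0) - (if j = l then a i * v i / a l else 0) := by
      simp only [z, Pi.smul_apply, Pi.sub_apply, Pi.single_apply, smul_eq_mul]
      push_cast
      split_ifs <;> field_simp <;> ring
    simp only [Finset.sum_apply, smul_apply, Finset.sum_sub_distrib, Finset.sum_ite_eq,
      Finset.mem_univ, if_true]
    split_ifs
    · rw [← Finset.sum_div, hv₀, zero_div, sub_zero]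
    · simp
  rw [v_eq]
  exact Submodule.sum_mem _ fun i _ => Submodule.smul_mem _ _
    (Submodule.subset_span (mem_integerKernel_iff.2 ⟨z i, hz i, rfl⟩))

end IntegerKernel

lemma exists_isSuccessiveMinima_integerKernel {m : ℕ} {a : Fin (m + 1) → ℤ} (ha : a ≠ 0) :
    ∃ x : Fin m → Fin (m + 1) → ℤ, (∀ i, a ⬝ᵥ x i = 0) ∧
      IsSuccessiveMinima (integerKernel a) fun i j => (x i j : ℝ) := by
  have hm : m ≤ Module.finrank ℝ (Submodule.span ℝ (integerKernel a)) := by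
    have := Submodule.finrank_mono (ker_dotProduct_le_span_integerKernel ha)
    have := finrank_ker_dotProduct_add_one ha
    lia
  obtain ⟨y, hy⟩ := exists_isSuccessiveMinima (finite_integerKernel_inter_closedBall a) m hm
  choose x hx hxy using fun i => mem_integerKernel_iff.1 (hy.mem i)
  obtain rfl : (fun i j => (x i j : ℝ)) = y := funext hxy
  exact ⟨x, hx, hy⟩

lemma sub_mem_ker_dotProduct_of_mem_slab {n : ℕ} {a : Fin n → ℤ} {N : ℝ} {u v : Fin n → ℝ}
    (hu : u ∈ slab (fun j => (a j : ℝ)) N) (hv : v ∈ slab (fun j => (a j : ℝ)) N)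
    (huv : u - v ∈ (Submodule.span ℤ (Set.range (Pi.basisFun ℝ (Fin n)))).toAddSubgroup) :
    u - v ∈ (dotProductEquiv ℝ (Fin n) fun j => (a j : ℝ)).ker := by
  obtain ⟨z, hz⟩ := mem_span_int_basisFun.1 huv
  have hlt : |((a ⬝ᵥ z : ℤ) : ℝ)| < 1 := by
    rw [← dotProduct_intCast, hz, dotProduct_sub]
    linarith [abs_sub ((fun j => (a j : ℝ)) ⬝ᵥ u) ((fun j => (a j : ℝ)) ⬝ᵥ v), hu.2, hv.2]
  have hzero : a ⬝ᵥ z = 0 := Int.abs_lt_one_iff.1 (by exact_mod_cast hlt)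
  rw [LinearMap.mem_ker, dotProductEquiv_apply_apply, ← hz, dotProduct_intCast, hzero,
    Int.cast_zero]

lemma prod_norm_mul_volume_slab_le_one {m : ℕ} {a : Fin (m + 1) → ℤ} (ha : a ≠ 0)
    {x : Fin m → Fin (m + 1) → ℝ} (hx : IsSuccessiveMinima (integerKernel a) x) {N : ℝ}
    (hN : 0 < N) (hxN : ∀ i, ‖x i‖ ≤ N) :
    (∏ i, ‖x i‖) / N ^ m * volume.real (slab (fun j => (a j : ℝ)) N) ≤ 1 := by
  have volume_fundamentalDomain :
      volume (ZSpan.fundamentalDomain (Pi.basisFun ℝ (Fin (m + 1)))) = 1 := by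
    rw [ZSpan.fundamentalDomain_pi_basisFun, volume_pi_pi]
    simp
  have : Countable (Submodule.span ℤ (Set.range (Pi.basisFun ℝ (Fin (m + 1))))).toAddSubgroup :=
    inferInstanceAs (Countable (Submodule.span ℤ (Set.range (Pi.basisFun ℝ (Fin (m + 1))))))
  have hle := hx.prod_norm_mul_measure_le volume
    (ZSpan.isAddFundamentalDomain' (Pi.basisFun ℝ (Fin (m + 1))) volume)
    (Nat.succ_injective (finrank_ker_dotProduct_add_one ha)) (isOpen_slab _ N) (convex_slab _ N)
    (fun u hu v hv => sub_mem_ker_dotProduct_of_mem_slab hu hv) hN hxN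
    (fun u hu v hv => (norm_sub_le u v).trans_lt (by linarith [hu.1, hv.1]))
  rw [volume_fundamentalDomain] at hle
  have hreal := ENNReal.toReal_mono ENNReal.one_ne_top hle
  rwa [ENNReal.toReal_mul, ENNReal.toReal_ofReal (by positivity), ENNReal.toReal_one] at hreal

lemma exists_prod_norm_lt_of_abs_lt_norm {m : ℕ} {a : Fin (m + 3) → ℤ} {l : Fin (m + 3)}
    (hl : |(a l : ℝ)| < ‖fun j => (a j : ℝ)‖) :
    ∃ x : Fin (m + 2) → Fin (m + 3) → ℤ, LinearIndependent ℤ x ∧ (∀ i, a ⬝ᵥ x i = 0) ∧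
      ∏ i, ‖fun j => (x i j : ℝ)‖ < ‖fun j => (a j : ℝ)‖ / sigma (m + 3) := by
  have ha : a ≠ 0 := by
    rintro rfl
    simp at hl
  have norm_pos : 0 < ‖fun j => (a j : ℝ)‖ := (abs_nonneg _).trans_lt hl
  obtain ⟨x, hx, hmin⟩ := exists_isSuccessiveMinima_integerKernel ha
  refine ⟨x, linearIndependent_int_of_real hmin.linearIndependent, hx, ?_⟩
  have prod_pos : 0 < ∏ i, ‖fun j => (x i j : ℝ)‖ :=
    Finset.prod_pos fun i _ => norm_pos_iff.2 (hmin.linearIndependent.ne_zero i)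
  obtain ⟨N, hvol, hN, hxN⟩ := ((eventually_lt_volume_slab (a := fun j => (a j : ℝ)) hl).and
    ((Filter.eventually_gt_atTop 0).and (Filter.eventually_all.2 fun i =>
      Filter.eventually_ge_atTop ‖fun j => (x i j : ℝ)‖))).exists
  have hlt : (∏ i, ‖fun j => (x i j : ℝ)‖) * (sigma (m + 3) / ‖fun j => (a j : ℝ)‖) < 1 :=
    calc _ = (∏ i, ‖fun j => (x i j : ℝ)‖) / N ^ (m + 2) *
          (N ^ (m + 2) * (sigma (m + 3) / ‖fun j => (a j : ℝ)‖)) := by field_simp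
      _ < (∏ i, ‖fun j => (x i j : ℝ)‖) / N ^ (m + 2) *
          volume.real (slab (fun j => (a j : ℝ)) N) := by gcongr
      _ ≤ 1 := prod_norm_mul_volume_slab_le_one ha hmin hN hxN
  rwa [← mul_div_assoc, div_lt_one norm_pos, ← lt_div_iff₀ (sigma_pos (m + 1))] at hlt

lemma exists_norm_le_one_of_abs_eq {m : ℕ} {a : Fin (m + 1) → ℤ} (ha₀ : a 0 ≠ 0)
    (ha : ∀ i, |a i| = |a 0|) :
    ∃ x : Fin m → Fin (m + 1) → ℤ, LinearIndependent ℤ x ∧ (∀ i, a ⬝ᵥ x i = 0) ∧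
      ∀ i, ‖fun j => (x i j : ℝ)‖ ≤ 1 := by
  have a_ne_zero (i : Fin (m + 1)) : a i ≠ 0 := abs_ne_zero.1 (ha i ▸ abs_ne_zero.2 ha₀)
  let x (i : Fin m) : Fin (m + 1) → ℤ :=
    Pi.single 0 (a 0).sign - Pi.single i.succ (a i.succ).sign
  refine ⟨x, ?_, fun i => ?_, fun i => ?_⟩
  · have tail_eq : LinearMap.funLeft ℤ ℤ Fin.succ ∘ x =
        fun i => Pi.single i (-(a i.succ).sign) := by
      ext i j
      simp [x, LinearMap.funLeft_apply, Pi.single_apply, neg_ite]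
    refine LinearIndependent.of_comp (LinearMap.funLeft ℤ ℤ Fin.succ) ?_
    rw [tail_eq]
    exact Pi.linearIndependent_single_of_ne_zero fun i =>
      neg_ne_zero.2 (mt Int.sign_eq_zero_iff_zero.1 (a_ne_zero _))
  · rw [dotProduct_sub, dotProduct_single, dotProduct_single, mul_comm,
      Int.sign_mul_self_eq_abs, mul_comm, Int.sign_mul_self_eq_abs, ha i.succ, sub_self]
  · have abs_le_one (j : Fin (m + 1)) : |x i j| ≤ 1 := by
      induction j using Fin.cases with
      | zero => simp [x, Int.abs_sign_of_ne_zero ha₀]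
      | succ j => by_cases hij : j = i <;> simp [x, hij, Int.abs_sign_of_ne_zero (a_ne_zero _)]
    exact (pi_norm_le_iff_of_nonneg zero_le_one).2 fun j => by
      rw [Real.norm_eq_abs]
      exact_mod_cast abs_le_one j

lemma exists_prod_norm_lt_of_forall_abs_eq_norm {m : ℕ} {a : Fin (m + 3) → ℤ} (ha : a ≠ 0)
    (habs : ∀ j, |(a j : ℝ)| = ‖fun j => (a j : ℝ)‖) :
    ∃ x : Fin (m + 2) → Fin (m + 3) → ℤ, LinearIndependent ℤ x ∧ (∀ i, a ⬝ᵥ x i = 0) ∧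
      ∏ i, ‖fun j => (x i j : ℝ)‖ < ‖fun j => (a j : ℝ)‖ / sigma (m + 3) := by
  have abs_eq (j : Fin (m + 3)) : |a j| = |a 0| := by
    exact_mod_cast (habs j).trans (habs 0).symm
  have ha₀ : a 0 ≠ 0 := fun h =>
    ha (funext fun j => abs_eq_zero.1 (by rw [abs_eq j, h, abs_zero]))
  obtain ⟨x, hli, hx, hnorm⟩ := exists_norm_le_one_of_abs_eq ha₀ abs_eq
  refine ⟨x, hli, hx, ?_⟩
  have one_le : (1 : ℝ) ≤ |(a 0 : ℝ)| := by exact_mod_cast Int.one_le_abs ha₀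
  calc ∏ i, ‖fun j => (x i j : ℝ)‖
      ≤ 1 := Finset.prod_le_one (fun i _ => norm_nonneg _) fun i _ => hnorm i
    _ < ‖fun j => (a j : ℝ)‖ / sigma (m + 3) := by
      rw [lt_div_iff₀ (sigma_pos (m + 1)), one_mul, ← habs 0]
      exact (sigma_lt_one m).trans_le one_le

theorem siegel_lemma_product_general (n : ℕ) (hn : 3 ≤ n) (a : Fin n → ℤ) (ha : a ≠ 0) :
    ∃ x : Fin (n - 1) → (Fin n → ℤ), LinearIndependent ℤ x ∧
      (∀ i, ∑ j, a j * x i j = 0) ∧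
      (∏ i, ‖(fun j => (x i j : ℝ))‖) < ‖(fun j => (a j : ℝ))‖ / sigma n := by
  obtain ⟨m, rfl⟩ := Nat.exists_eq_add_of_le' hn
  by_cases habs : ∀ j, |(a j : ℝ)| = ‖fun j => (a j : ℝ)‖
  · exact exists_prod_norm_lt_of_forall_abs_eq_norm ha habs
  · obtain ⟨l, hl⟩ := not_forall.1 habs
    have hle : |(a l : ℝ)| ≤ ‖fun j => (a j : ℝ)‖ := norm_le_pi_norm (fun j => (a j : ℝ)) l
    exact exists_prod_norm_lt_of_abs_lt_norm (hle.lt_of_ne hl)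

theorem siegel_lemma_product (n : ℕ) (hn : 5 ≤ n) (a : Fin n → ℤ) (ha : a ≠ 0) :
    ∃ x : Fin (n - 1) → (Fin n → ℤ), LinearIndependent ℤ x ∧
      (∀ i, ∑ j, a j * x i j = 0) ∧
      (∏ i, ‖(fun j => (x i j : ℝ))‖) < ‖(fun j => (a j : ℝ))‖ / sigma n :=
  siegel_lemma_product_general n (by lia) a ha
end
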